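/- arXiv:1805.09518 — 3 statements merged into one kernel-verified Lean document; each statement's English description precedes it below -/
import Mathlib

section
/- The ordered Ramsey number of the ordered diamond graph K₄ − e with vertex set {1,2,3,4} and all edges of K₄ except {1,4} equals 15: every 2-coloring of the edges of the complete graph on {1,...,15} contains a monochromatic ordered copy of this graph, and there is a 2-coloring of the edges of the complete graph on {1,...,14} containing no such copy. -/
/-- A 2-coloring `c` of the edges of the complete graph on the ordered vertex set
`{1,…,N}` contains an ordered copy, in color `b`, of the ordered graph with vertex
set `{1,…,n}` and edge set `E` (edges listed as pairs `(i, j)` with `i < j`):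
there is a strictly increasing map `φ : {1,…,n} → {1,…,N}` such that every edge
`(i, j) ∈ E` has `(φ i, φ j)` colored `b`. -/
def ContainsOrderedCopy (n N : ℕ) (E : Finset (ℕ × ℕ)) (c : ℕ → ℕ → Bool) (b : Bool) :
    Prop :=
  ∃ φ : ℕ → ℕ,
    (∀ i, 1 ≤ i → i ≤ n → 1 ≤ φ i ∧ φ i ≤ N) ∧
    (∀ i j, 1 ≤ i → i < j → j ≤ n → φ i < φ j) ∧
    (∀ e ∈ E, c (φ e.1) (φ e.2) = b)

/-- A 2-coloring `c` of the edges of the complete graph on `{1,…,N}` contains a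
monochromatic ordered copy of the ordered graph with vertex set `{1,…,n}` and
edge set `E`. -/
def ContainsMonoOrderedCopy (n N : ℕ) (E : Finset (ℕ × ℕ)) (c : ℕ → ℕ → Bool) : Prop :=
  ∃ b : Bool, ContainsOrderedCopy n N E c b

/-!
In a coloring without monochromatic diamonds no edge is both the left edge of a monochromatic
triangle `t < u < v` and the right edge of another one, so marking all left edges leaves all right
edges unmarked. Reversing the order (and complementing the marks) and exchanging the two colors
preserve this situation.

The vertices other than the first and the last one fall into four classes according to their colors
to these two. For 15 vertices the classes contain 13 vertices in total, and up to the symmetries it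
is enough to show that seven configurations of class sizes are impossible. Four of the
configurations are invariant under a symmetry that exchanges the two marks or the two colors of the
pair formed by the first and the last vertex of some class; for these it is enough to exclude one
value.

Each of these facts is verified by path consistency: the possible states (order, color, mark) of the
pairs are narrowed down by looking at one triangle at a time until some pair has none left. This is
complemented by a case distinction given by a decision tree. All its leaves are processed in
parallel, one bit of a natural number for each of them.
-/

namespace OrderedDiamond

open OrderDual

/-- A 2-coloring of the pairs of a linear order in which every pair `u < v` is marked or unmarked
so that a monochromatic triangle has a marked left edge and an unmarked right edge. Both functions
are only meaningful at `u < v`. -/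
structure MarkedColoring (V : Type*) [LinearOrder V] where
  color : V → V → Bool
  mark : V → V → Bool
  mark_left : ∀ ⦃u v w⦄, u < v → v < w → color u v = color u w → color v w = color u w →
    mark u v = true
  mark_right : ∀ ⦃u v w⦄, u < v → v < w → color u v = color u w → color v w = color u w →
    mark v w = false

/-- The state of an ordered pair `(u, v)` of distinct vertices of a marked coloring: whether
`u < v`, followed by the color and the mark of the pair. -/
structure Arc where
  lt : Bool
  color : Bool
  mark : Bool

/-- The state of the reversed pair. -/
def Arc.swap (a : Arc) : Arc := ⟨!a.lt, a.color, a.mark⟩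

namespace MarkedColoring

variable {V : Type*} [LinearOrder V] (c : MarkedColoring V)

/-- The marked coloring of the reversed order; the marks are complemented because left and right
edges of triangles are exchanged. -/
def reverse : MarkedColoring Vᵒᵈ where
  color u v := c.color (ofDual v) (ofDual u)
  mark u v := !c.mark (ofDual v) (ofDual u)
  mark_left _ _ _ huv hvw hl hr :=
    congrArg not (c.mark_right hvw huv hr hl)
  mark_right _ _ _ huv hvw hl hr :=
    congrArg not (c.mark_left hvw huv hr hl)

/-- The marked coloring with the two colors exchanged. -/
def compl : MarkedColoring V where
  color u v := !c.color u v
  mark := c.mark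
  mark_left _ _ _ huv hvw hl hr := c.mark_left huv hvw (Bool.not_inj hl) (Bool.not_inj hr)
  mark_right _ _ _ huv hvw hl hr := c.mark_right huv hvw (Bool.not_inj hl) (Bool.not_inj hr)

/-- The state of the pair `(u, v)`. -/
def arc (u v : V) : Arc :=
  if u < v then ⟨true, c.color u v, c.mark u v⟩ else ⟨false, c.color v u, c.mark v u⟩

variable {c} {u v : V}

theorem arc_of_lt (h : u < v) : c.arc u v = ⟨true, c.color u v, c.mark u v⟩ := if_pos h

theorem arc_of_gt (h : v < u) : c.arc u v = ⟨false, c.color v u, c.mark v u⟩ := if_neg h.not_gt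

theorem arc_swap (h : u ≠ v) : (c.arc u v).swap = c.arc v u := by
  rcases h.lt_or_gt with h | h <;> simp [arc_of_lt h, arc_of_gt h, Arc.swap]

theorem reverse_arc (h : u < v) :
    c.reverse.arc (toDual v) (toDual u) = ⟨true, c.color u v, !c.mark u v⟩ :=
  arc_of_lt (toDual_lt_toDual.2 h)

theorem reverse_compl_arc (h : u < v) :
    c.reverse.compl.arc (toDual v) (toDual u) = ⟨true, !c.color u v, !c.mark u v⟩ :=
  arc_of_lt (toDual_lt_toDual.2 h)

end MarkedColoring

/-! ### Decision trees -/

/- The evaluated functions use `Nat.land`, `Nat.beq` and the like instead of the notation for them,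
since the kernel computes these with binary arithmetic without unfolding instances. -/

/-- A decision tree: `node v l r` branches on the Boolean variable `v`, to `l` if it is true and to
`r` if it is false. The leaves, numbered from left to right, are called *lanes*; a set of lanes is
encoded by the bits of a natural number, so that all branches are processed in parallel. -/
inductive SplitTree
  | leaf
  | node (v : ℕ) (l r : SplitTree)

@[simp]
theorem testBit_land (m n k : ℕ) : (m.land n).testBit k = (m.testBit k && n.testBit k) :=
  Nat.testBit_and m n k

@[simp]
theorem testBit_lor (m n k : ℕ) : (m.lor n).testBit k = (m.testBit k || n.testBit k) :=
  Nat.testBit_or m n k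

@[simp]
theorem testBit_shiftLeft (m n k : ℕ) :
    (m.shiftLeft n).testBit k = (decide (n ≤ k) && m.testBit (k - n)) :=
  Nat.testBit_shiftLeft m

namespace SplitTree

/-- The number of lanes. -/
def size : SplitTree → ℕ
  | leaf => 1
  | node _ l r => l.size.add r.size

/-- The set of variables on which the tree branches, encoded by bits. -/
def vars : SplitTree → ℕ
  | leaf => 0
  | node v l r => (Nat.shiftLeft 1 v).lor (l.vars.lor r.vars)

/-- The set of all lanes. -/
def lanes (t : SplitTree) : ℕ := (Nat.shiftLeft 1 t.size).pred

/-- The set of lanes whose branch contradicts that variable `i` has value `b`. -/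
def conflicts (i : ℕ) (b : Bool) : SplitTree → ℕ
  | leaf => 0
  | node v l r =>
    -- a shortcut for the evaluation: no lane contradicts the value of an absent variable
    bif ((node v l r).vars.land (Nat.shiftLeft 1 i)).beq 0 then 0
    else bif v.beq i then bif b then r.lanes.shiftLeft l.size else l.lanes
    else (l.conflicts i b).lor ((r.conflicts i b).shiftLeft l.size)

@[simp]
theorem testBit_lanes (t : SplitTree) (k : ℕ) : t.lanes.testBit k = decide (k < t.size) := by
  change (1 <<< t.size - 1).testBit k = _
  rw [Nat.one_shiftLeft, Nat.testBit_two_pow_sub_one]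

theorem testBit_conflicts_of_size_le (i : ℕ) (b : Bool) (t : SplitTree) {k : ℕ} (hk : t.size ≤ k) :
    (t.conflicts i b).testBit k = false := by
  induction t generalizing k with
  | leaf => exact Nat.zero_testBit k
  | node v l r ihl ihr =>
    have hk : l.size + r.size ≤ k := hk
    have hl : l.size ≤ k := by omega
    have hr : r.size ≤ k - l.size := by omega
    rw [conflicts]
    cases ((node v l r).vars.land (Nat.shiftLeft 1 i)).beq 0 <;> cases v.beq i <;> cases b <;>
      simp [ihl hl, ihr hr, hl, hr]

theorem exists_lane (σ : ℕ → Bool) (t : SplitTree) :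
    ∃ k < t.size, ∀ i, (t.conflicts i (σ i)).testBit k = false := by
  induction t with
  | leaf => exact ⟨0, Nat.one_pos, fun _ => Nat.zero_testBit 0⟩
  | node v l r ihl ihr =>
    obtain ⟨kl, hkl, hl⟩ := ihl
    obtain ⟨kr, hkr, hr⟩ := ihr
    have hsize : (node v l r).size = l.size + r.size := rfl
    refine ⟨bif σ v then kl else l.size + kr, by cases σ v <;> grind, fun i => ?_⟩
    rw [conflicts]
    cases ((node v l r).vars.land (Nat.shiftLeft 1 i)).beq 0
    case true => simp
    cases hvi : v.beq i
    case true =>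
      obtain rfl := Nat.eq_of_beq_eq_true hvi
      cases σ v <;> simp [hkl.not_ge]
    case false =>
      cases σ v <;>
        simp [hl, hr, hkl.not_ge, testBit_conflicts_of_size_le i (σ i) l (Nat.le_add_right _ kr)]

end SplitTree

/-! ### Path consistency -/

/-- A function on `Bool` as a pair of values. -/
structure BoolTable (α : Type) where
  ofFalse : α
  ofTrue : α

namespace BoolTable

/-- Lookup in a table. -/
def get {α : Type} (T : BoolTable α) : Bool → α
  | false => T.ofFalse
  | true => T.ofTrue

/-- The table of a function. -/
def tabulate {α : Type} (f : Bool → α) : BoolTable α := ⟨f false, f true⟩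

@[simp]
theorem get_tabulate {α : Type} (f : Bool → α) (b : Bool) : (tabulate f).get b = f b := by
  cases b <;> rfl

end BoolTable

/-- Half of a `Cell`: the sets of lanes indexed by the color and the mark of a pair whose order is
known. -/
abbrev Sheet := BoolTable (BoolTable ℕ)

namespace Sheet

/-- The lanes in which the pair may have color `x`. -/
def colored (P : Sheet) (x : Bool) : ℕ := ((P.get x).get false).lor ((P.get x).get true)

/-- The lanes in which the pair may have some color. -/
def any (P : Sheet) : ℕ := (P.colored false).lor (P.colored true)

/-- The lanes in which the two pairs may have colors that are not both `x`. -/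
def notBoth (P Q : Sheet) (x : Bool) : ℕ :=
  ((P.colored !x).land Q.any).lor (P.any.land (Q.colored !x))

variable {P Q : Sheet} {k : ℕ} {x x' y y' : Bool}

theorem testBit_colored (h : ((P.get x).get y).testBit k) : (P.colored x).testBit k := by
  cases y <;> simp [colored, h]

theorem testBit_any (h : (P.colored x).testBit k) : P.any.testBit k := by
  cases x <;> simp [any, h]

theorem testBit_notBoth {z : Bool} (hP : (P.colored x).testBit k) (hQ : (Q.colored x').testBit k)
    (hne : ¬(x = z ∧ x' = z)) : (P.notBoth Q z).testBit k := by
  have hP' := testBit_any hP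
  have hQ' := testBit_any hQ
  cases x <;> cases x' <;> cases z <;> simp_all [notBoth]

end Sheet

/-- For every possible state of a pair of vertices, the set of lanes in which the pair may have
this state. -/
abbrev Cell := BoolTable Sheet

namespace Cell

/-- The lanes in which the pair may have state `a`. -/
def lanes (C : Cell) (a : Arc) : ℕ := ((C.get a.lt).get a.color).get a.mark

/-- The cell of a function of order, color and mark. -/
def ofFun (f : Bool → Bool → Bool → ℕ) : Cell :=
  .tabulate fun o => .tabulate fun x => .tabulate fun y => f o x y

/-- The sheet for a pair `(u, v)` with `u < v`. -/
def up (C : Cell) : Sheet := C.ofTrue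

/-- The sheet for a pair `(u, v)` with `v < u`. -/
def down (C : Cell) : Sheet := C.ofFalse

/-- The cell of the reversed pair. -/
def swap (C : Cell) : Cell := ⟨C.up, C.down⟩

/-- The lanes in which the pair may have some state. -/
def any (C : Cell) : ℕ := C.down.any.lor C.up.any

/-- For a pair `u < w` of color `x` and cells `A`, `B` of `(v, u)`, `(v, w)`, the lanes in which
`v` may be placed without regard to the mark of `(u, w)`: not completing a triangle of color `x`
and with `v < u`, `u < v < w` or `w < v`, respectively, or completing one with `u < v < w`. -/
def placeable (A B : Cell) (x : Bool) : ℕ :=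
  (((A.up.notBoth B.up x).lor (A.down.notBoth B.up x)).lor (A.down.notBoth B.down x)).lor
    (((A.down.get x).get true).land ((B.up.get x).get false))

/-- The lanes in which `v` may be placed relative to a pair `u < w` of given color and mark,
where `A` and `B` are the cells of `(v, u)` and `(v, w)`. An unmarked pair may also be the right
edge, and a marked pair the left edge, of a monochromatic triangle. -/
def support (A B : Cell) (x : Bool) : Bool → ℕ
  | false => (A.placeable B x).lor (((A.up.get x).get true).land (B.up.colored x))
  | true => (A.placeable B x).lor ((A.down.colored x).land ((B.down.get x).get false))

/-- The restriction of the cell `C` of `(u, w)` to the states that are compatible with the cells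
`A` and `B` of `(v, u)` and `(v, w)`. -/
def refine (A B C : Cell) : Cell :=
  ofFun fun o x y =>
    (((C.get o).get x).get y).land (bif o then A.support B x y else B.support A x y)

variable {A B C : Cell} {k : ℕ}

@[simp]
theorem lanes_ofFun (f : Bool → Bool → Bool → ℕ) (a : Arc) :
    (ofFun f).lanes a = f a.lt a.color a.mark := by
  simp [lanes, ofFun]

theorem lanes_swap (C : Cell) (a : Arc) : C.swap.lanes a.swap = C.lanes a := by
  obtain ⟨_ | _, x, y⟩ := a <;> rfl

theorem testBit_any {a : Arc} (h : (C.lanes a).testBit k) : C.any.testBit k := by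
  obtain ⟨o, x, y⟩ := a
  have hany : ((C.get o).any).testBit k := Sheet.testBit_any (Sheet.testBit_colored h)
  rw [any, testBit_lor, Bool.or_eq_true]
  cases o
  · exact Or.inl hany
  · exact Or.inr hany

theorem testBit_support_of_placeable {x y : Bool} (h : (A.placeable B x).testBit k) :
    (A.support B x y).testBit k := by
  cases y <;> simp [support, h]

variable {V : Type*} [LinearOrder V] {c : MarkedColoring V} {u v w : V}

theorem lanes_arc_of_lt (C : Cell) (h : u < v) :
    C.lanes (c.arc u v) = (C.up.get (c.color u v)).get (c.mark u v) := by
  rw [MarkedColoring.arc_of_lt h]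
  rfl

theorem lanes_arc_of_gt (C : Cell) (h : v < u) :
    C.lanes (c.arc u v) = (C.down.get (c.color v u)).get (c.mark v u) := by
  rw [MarkedColoring.arc_of_gt h]
  rfl

theorem testBit_support_first (hvu : v < u) (huw : u < w)
    (hA : (A.lanes (c.arc v u)).testBit k) (hB : (B.lanes (c.arc v w)).testBit k) :
    (A.support B (c.color u w) (c.mark u w)).testBit k := by
  rw [lanes_arc_of_lt _ hvu] at hA
  rw [lanes_arc_of_lt _ (hvu.trans huw)] at hB
  have hB' := Sheet.testBit_colored hB
  by_cases hmono : c.color v u = c.color u w ∧ c.color v w = c.color u w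
  · obtain ⟨hl, hm⟩ := hmono
    rw [c.mark_left hvu huw (hl.trans hm.symm) hm.symm, hl] at hA
    rw [hm] at hB'
    simp [c.mark_right hvu huw (hl.trans hm.symm) hm.symm, support, hA, hB']
  · apply testBit_support_of_placeable
    simp [placeable, Sheet.testBit_notBoth (Sheet.testBit_colored hA) hB' hmono]

theorem testBit_support_middle (huv : u < v) (hvw : v < w)
    (hA : (A.lanes (c.arc v u)).testBit k) (hB : (B.lanes (c.arc v w)).testBit k) :
    (A.support B (c.color u w) (c.mark u w)).testBit k := by
  rw [lanes_arc_of_gt _ huv] at hA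
  rw [lanes_arc_of_lt _ hvw] at hB
  apply testBit_support_of_placeable
  by_cases hmono : c.color u v = c.color u w ∧ c.color v w = c.color u w
  · obtain ⟨hl, hr⟩ := hmono
    rw [c.mark_left huv hvw hl hr, hl] at hA
    rw [c.mark_right huv hvw hl hr, hr] at hB
    simp [placeable, hA, hB]
  · simp [placeable,
      Sheet.testBit_notBoth (Sheet.testBit_colored hA) (Sheet.testBit_colored hB) hmono]

theorem testBit_support_last (huw : u < w) (hwv : w < v)
    (hA : (A.lanes (c.arc v u)).testBit k) (hB : (B.lanes (c.arc v w)).testBit k) :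
    (A.support B (c.color u w) (c.mark u w)).testBit k := by
  rw [lanes_arc_of_gt _ (huw.trans hwv)] at hA
  rw [lanes_arc_of_gt _ hwv] at hB
  have hA' := Sheet.testBit_colored hA
  by_cases hmono : c.color u v = c.color u w ∧ c.color w v = c.color u w
  · obtain ⟨hm, hr⟩ := hmono
    rw [c.mark_right huw hwv hm.symm (hr.trans hm.symm), hr] at hB
    rw [hm] at hA'
    simp [c.mark_left huw hwv hm.symm (hr.trans hm.symm), support, hA', hB]
  · apply testBit_support_of_placeable
    simp [placeable, Sheet.testBit_notBoth hA' (Sheet.testBit_colored hB) hmono]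

theorem testBit_support (hvu : v ≠ u) (hvw : v ≠ w) (huw : u < w)
    (hA : (A.lanes (c.arc v u)).testBit k) (hB : (B.lanes (c.arc v w)).testBit k) :
    (A.support B (c.color u w) (c.mark u w)).testBit k := by
  rcases hvu.lt_or_gt with hvu | huv
  · exact testBit_support_first hvu huw hA hB
  rcases hvw.lt_or_gt with hvw | hwv
  · exact testBit_support_middle huv hvw hA hB
  · exact testBit_support_last huw hwv hA hB

theorem testBit_refine (hvu : v ≠ u) (hvw : v ≠ w) (huw : u ≠ w)
    (hA : (A.lanes (c.arc v u)).testBit k) (hB : (B.lanes (c.arc v w)).testBit k)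
    (hC : (C.lanes (c.arc u w)).testBit k) :
    ((A.refine B C).lanes (c.arc u w)).testBit k := by
  rw [refine, lanes_ofFun, testBit_land, Bool.and_eq_true]
  refine ⟨hC, ?_⟩
  rcases huw.lt_or_gt with huw | huw
  · simpa [MarkedColoring.arc_of_lt huw] using testBit_support hvu hvw huw hA hB
  · simpa [MarkedColoring.arc_of_gt huw] using testBit_support hvw hvu huw hB hA

end Cell

/-- One round of path consistency for a list of vertices whose first element is `u`: the pairs of
the other vertices are restricted by their pairs with `u`, and `u` is moved to the end. The
arguments are the cells of the pairs starting with `u` and the rows for the other vertices; the row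
of a vertex consists of the cells of its pairs with all later vertices. -/
def rotate : List Cell → List (List Cell) → List (List Cell)
  | A :: r, q :: rs => (List.zipWith A.refine r q ++ [A.swap]) :: rotate r rs
  | _, _ => [[]]

/-- Whether, within `n` rounds of path consistency, for each lane some cell of the first row becomes
empty. -/
def refuted : ℕ → List (List Cell) → Bool
  | n + 1, (A :: r) :: rs =>
    (r.foldl (fun m C => m.land C.any) A.any).beq 0 || refuted n (rotate (A :: r) rs)
  | _, _ => false

/-- In lane `k`, the triangular array of cells permits the states of all pairs of vertices. -/
inductive Permits {V : Type*} [LinearOrder V] (c : MarkedColoring V) (k : ℕ) :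
    List V → List (List Cell) → Prop
  | nil : Permits c k [] []
  | cons {u us r rs} (hr : List.Forall₂ (fun w C => (C.lanes (c.arc u w)).testBit k) us r)
      (hrs : Permits c k us rs) : Permits c k (u :: us) (r :: rs)

section Permits

variable {V : Type*} [LinearOrder V] {c : MarkedColoring V} {k : ℕ} {u v : V} {us : List V}

theorem forall₂_refine {A : Cell} {r q : List Cell} (huv : u ≠ v) (hu : u ∉ us) (hv : v ∉ us)
    (hA : (A.lanes (c.arc u v)).testBit k)
    (hr : List.Forall₂ (fun w C => (C.lanes (c.arc u w)).testBit k) us r)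
    (hq : List.Forall₂ (fun w C => (C.lanes (c.arc v w)).testBit k) us q) :
    List.Forall₂ (fun w C => (C.lanes (c.arc v w)).testBit k) (us ++ [u])
      (List.zipWith A.refine r q ++ [A.swap]) := by
  induction hr generalizing q with
  | nil =>
    cases hq
    rw [← Cell.lanes_swap, MarkedColoring.arc_swap huv] at hA
    simpa using hA
  | cons hB _ ih =>
    obtain _ | ⟨hC, hq⟩ := hq
    rw [List.mem_cons, not_or] at hu hv
    exact .cons (Cell.testBit_refine huv hu.1 hv.1 hA hB hC) (ih hu.2 hv.2 hq)

theorem Permits.rotate {r : List Cell} {rs : List (List Cell)} (hnodup : (u :: us).Nodup)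
    (hr : List.Forall₂ (fun w C => (C.lanes (c.arc u w)).testBit k) us r)
    (hrs : Permits c k us rs) : Permits c k (us ++ [u]) (rotate r rs) := by
  induction hrs generalizing r with
  | nil =>
    cases hr
    exact .cons .nil .nil
  | cons hq _ ih =>
    obtain _ | ⟨hA, hr⟩ := hr
    simp only [List.nodup_cons, List.mem_cons, not_or] at hnodup
    obtain ⟨⟨huv, hu⟩, hv, hus⟩ := hnodup
    exact .cons (forall₂_refine huv hu hv hA hr hq) (ih (List.nodup_cons.2 ⟨hu, hus⟩) hr)

theorem testBit_foldl_any {r : List Cell} {m : ℕ} (hm : m.testBit k)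
    (hr : List.Forall₂ (fun w C => (C.lanes (c.arc u w)).testBit k) us r) :
    (r.foldl (fun m C => m.land C.any) m).testBit k := by
  induction hr generalizing m with
  | nil => exact hm
  | cons hC _ ih => exact ih (by simp [hm, Cell.testBit_any hC])

theorem Permits.refuted_eq_false {M : List (List Cell)} (hM : Permits c k us M)
    (hnodup : us.Nodup) (n : ℕ) : refuted n M = false := by
  induction n generalizing us M with
  | zero => rfl
  | succ n ih =>
    obtain _ | ⟨_ | ⟨hA, hr⟩, hrs⟩ := hM
    · rfl
    · rfl
    · refine Bool.or_eq_false_iff.2 ⟨?_, ih (Permits.rotate hnodup (.cons hA hr) hrs) ?_⟩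
      · refine Bool.eq_false_iff.2 fun h => ?_
        have hbit := testBit_foldl_any (Cell.testBit_any hA) hr
        rw [Nat.eq_of_beq_eq_true h, Nat.zero_testBit] at hbit
        exact Bool.false_ne_true hbit
      · exact (List.perm_append_singleton _ _).nodup_iff.2 hnodup

end Permits

/-! ### Constraint systems -/

@[simp]
theorem testBit_xor (m n k : ℕ) : (m.xor n).testBit k = (m.testBit k ^^ n.testBit k) :=
  Nat.testBit_xor m n k

/-- The cell of a pair subject to the constraint `D`. The tree refers to the color, the mark and the
order of the pair as the variables `v`, `v + 1` and `v + 2`. -/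
def domain (D : Arc → Bool) (t : SplitTree) (v : ℕ) : Cell :=
  .ofFun fun o x y =>
    bif D ⟨o, x, y⟩ then
      t.lanes.xor
        (((t.conflicts v x).lor (t.conflicts (v.add 1) y)).lor (t.conflicts (v.add 2) o))
    else 0

/-- The cells for a list of variable vertices, each with its position, where `D` gives the
constraint on each pair. Positions are assumed to be less than `13`. -/
def initial {ι : Type*} (D : ι → ι → Arc → Bool) (t : SplitTree) : List (ι × ℕ) → List (List Cell)
  | [] => []
  | (a, i) :: as =>
    (as.map fun (b, j) => domain (D a b) t (Nat.mul 3 ((Nat.mul 13 i).add j))) :: initial D t as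

theorem testBit_domain {D : Arc → Bool} {d : Arc} (hD : D d) {t : SplitTree} {σ : ℕ → Bool}
    {k : ℕ} (hk : k < t.size) (hσ : ∀ i, (t.conflicts i (σ i)).testBit k = false) {v : ℕ}
    (hcolor : σ v = d.color) (hmark : σ (v + 1) = d.mark) (hlt : σ (v + 2) = d.lt) :
    ((domain D t v).lanes d).testBit k := by
  have h₀ := hσ v
  have h₁ := hσ (v + 1)
  have h₂ := hσ (v + 2)
  rw [hcolor] at h₀
  rw [hmark] at h₁
  rw [hlt] at h₂
  simp [domain, hD, hk, h₀, h₁, h₂]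

theorem exists_assignment (f : ℕ → ℕ → Arc) :
    ∃ σ : ℕ → Bool, ∀ i j, j < 13 → σ (3 * (13 * i + j)) = (f i j).color ∧
      σ (3 * (13 * i + j) + 1) = (f i j).mark ∧ σ (3 * (13 * i + j) + 2) = (f i j).lt := by
  refine ⟨fun v => bif v % 3 == 0 then (f (v / 39) (v / 3 % 13)).color else
    bif v % 3 == 1 then (f (v / 39) (v / 3 % 13)).mark else (f (v / 39) (v / 3 % 13)).lt,
    fun i j hj => ?_⟩
  have hdecode : ∀ s < 3, (3 * (13 * i + j) + s) / 39 = i ∧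
      (3 * (13 * i + j) + s) / 3 % 13 = j ∧ (3 * (13 * i + j) + s) % 3 = s := by omega
  obtain ⟨h0, h0', h0''⟩ := hdecode 0 (by omega)
  obtain ⟨h1, h1', h1''⟩ := hdecode 1 (by omega)
  obtain ⟨h2, h2', h2''⟩ := hdecode 2 (by omega)
  rw [Nat.add_zero] at h0 h0' h0''
  simp only [h0, h0', h0'', h1, h1', h1'', h2, h2', h2'']
  exact ⟨rfl, rfl, rfl⟩

section

variable {V ι : Type*} [LinearOrder V] {c : MarkedColoring V} {D : ι → ι → Arc → Bool}
  {t : SplitTree} {g : ι → V}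

theorem permits_initial {σ : ℕ → Bool} {k : ℕ} (hk : k < t.size)
    (hσ : ∀ i, (t.conflicts i (σ i)).testBit k = false) {as : List (ι × ℕ)}
    (has : as.Pairwise fun a b => D a.1 b.1 (c.arc (g a.1) (g b.1)) ∧
      σ (3 * (13 * a.2 + b.2)) = (c.arc (g a.1) (g b.1)).color ∧
      σ (3 * (13 * a.2 + b.2) + 1) = (c.arc (g a.1) (g b.1)).mark ∧
      σ (3 * (13 * a.2 + b.2) + 2) = (c.arc (g a.1) (g b.1)).lt) :
    Permits c k (as.map fun a => g a.1) (initial D t as) := by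
  induction has with
  | nil => exact .nil
  | cons ha _ ih =>
    refine .cons ?_ ih
    rw [List.forall₂_map_left_iff, List.forall₂_map_right_iff, List.forall₂_same]
    intro b hb
    obtain ⟨hD, hcolor, hmark, hlt⟩ := ha b hb
    exact testBit_domain hD hk hσ hcolor hmark hlt

theorem not_pairwise_of_refuted [Inhabited ι] {n : ℕ} {ls : List ι}
    (href : refuted n (initial D t ls.zipIdx)) (hlength : ls.length ≤ 13)
    (hnodup : (ls.map g).Nodup) : ¬ls.Pairwise fun a b => D a b (c.arc (g a) (g b)) := by
  intro hls
  obtain ⟨σ, hσ⟩ := exists_assignment fun i j => c.arc (g ls[i]!) (g ls[j]!)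
  obtain ⟨k, hk, hlane⟩ := t.exists_lane σ
  have hpermits : Permits c k (ls.zipIdx.map fun a => g a.1) (initial D t ls.zipIdx) := by
    refine permits_initial hk hlane ?_
    rw [← List.zipIdx_map_fst 0 ls, List.pairwise_map] at hls
    refine hls.imp_of_mem ?_
    rintro ⟨a, i⟩ ⟨b, j⟩ ha hb hD
    have ha : ls[i]? = some a := List.mem_zipIdx_iff_getElem?.1 ha
    have hb : ls[j]? = some b := List.mem_zipIdx_iff_getElem?.1 hb
    have hj : j < ls.length := (List.getElem?_eq_some_iff.1 hb).1
    have h := hσ i j (hj.trans_le hlength)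
    rw [List.getElem!_of_getElem? ha, List.getElem!_of_getElem? hb] at h
    exact ⟨hD, h⟩
  rw [← List.zipIdx_map_fst 0 ls, List.map_map] at hnodup
  exact absurd href (Bool.eq_false_iff.1 (hpermits.refuted_eq_false hnodup n))

end

/-! ### Vertex classes -/

/-- A formal vertex of a configuration: the `idx`-th vertex, counted from `0`, of the class of
vertices that are joined to the first vertex by color `bot` and to the last vertex by color
`top`. -/
structure Slot where
  bot : Bool
  top : Bool
  idx : ℕ
  deriving DecidableEq, Inhabited

/-- The slots of the configuration with `n p q` vertices in class `(p, q)`. -/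
def slots (n : Bool → Bool → ℕ) : List Slot :=
  [(false, true), (true, false), (false, false), (true, true)].flatMap fun (p, q) =>
    (List.range (n p q)).map (Slot.mk p q)

theorem mem_slots {n : Bool → Bool → ℕ} {a : Slot} : a ∈ slots n ↔ a.idx < n a.bot a.top := by
  obtain ⟨_ | _, _ | _, i⟩ := a <;> simp [slots]

theorem nodup_slots (n : Bool → Bool → ℕ) : (slots n).Nodup := by
  refine List.nodup_flatMap.2 ⟨fun _ _ => List.nodup_range.map fun i j h => (Slot.mk.inj h).2.2, ?_⟩
  simp [List.disjoint_left]

/-- The constraint on the state of a pair of slots: the vertices of a class are increasing, and a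
monochromatic triangle with the first or the last vertex determines the mark of the pair. -/
def allowed (a b : Slot) (d : Arc) : Bool :=
  (a.bot != b.bot || a.top != b.top || d.lt == Nat.blt a.idx b.idx) &&
    (a.bot != b.bot || a.bot != d.color || !d.mark) &&
    (a.top != b.top || a.top != d.color || d.mark)

namespace MarkedColoring

variable {V : Type*} [LinearOrder V] [BoundedOrder V] (c : MarkedColoring V)

/-- The vertices strictly between the first and the last one that are joined to these by the colors
`p` and `q`, respectively. -/
def vertexClass [Fintype V] (p q : Bool) : Finset V :=
  {v | ⊥ < v ∧ v < ⊤ ∧ c.color ⊥ v = p ∧ c.color v ⊤ = q}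

/-- Each class `(p, q)` has at least `n p q` vertices. -/
def Realizes [Fintype V] (n : Bool → Bool → ℕ) : Prop :=
  ∀ p q, n p q ≤ (c.vertexClass p q).card

/-- A choice of `n p q` vertices in each class `(p, q)`, in increasing order. -/
structure IsSelection [Fintype V] (n : Bool → Bool → ℕ) (f : Slot → V) : Prop where
  mem : ∀ a, a.idx < n a.bot a.top → f a ∈ c.vertexClass a.bot a.top
  lt : ∀ p q i j, i < j → j < n p q → f ⟨p, q, i⟩ < f ⟨p, q, j⟩

variable {c} {u v : V}

theorem mark_arc_of_bot {p : Bool} (hu : ⊥ < u) (hv : ⊥ < v) (huv : u ≠ v)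
    (hu' : c.color ⊥ u = p) (hv' : c.color ⊥ v = p) (h : (c.arc u v).color = p) :
    (c.arc u v).mark = false := by
  rcases huv.lt_or_gt with huv | huv
  · rw [arc_of_lt huv] at h ⊢
    exact c.mark_right hu huv (hu'.trans hv'.symm) (h.trans hv'.symm)
  · rw [arc_of_gt huv] at h ⊢
    exact c.mark_right hv huv (hv'.trans hu'.symm) (h.trans hu'.symm)

theorem mark_arc_of_top {p : Bool} (hu : u < ⊤) (hv : v < ⊤) (huv : u ≠ v)
    (hu' : c.color u ⊤ = p) (hv' : c.color v ⊤ = p) (h : (c.arc u v).color = p) :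
    (c.arc u v).mark = true := by
  rcases huv.lt_or_gt with huv | huv
  · rw [arc_of_lt huv] at h ⊢
    exact c.mark_left huv hv (h.trans hu'.symm) (hv'.trans hu'.symm)
  · rw [arc_of_gt huv] at h ⊢
    exact c.mark_left huv hu (h.trans hv'.symm) (hu'.trans hv'.symm)

variable [Fintype V]

theorem mem_vertexClass {p q : Bool} :
    v ∈ c.vertexClass p q ↔ ⊥ < v ∧ v < ⊤ ∧ c.color ⊥ v = p ∧ c.color v ⊤ = q := by
  simp [vertexClass]

theorem Realizes.exists_isSelection {n : Bool → Bool → ℕ} (hn : c.Realizes n) :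
    ∃ f, c.IsSelection n f := by
  refine ⟨fun a => if h : a.idx < n a.bot a.top then
    (c.vertexClass a.bot a.top).orderEmbOfCardLe (hn a.bot a.top) ⟨a.idx, h⟩ else ⊥,
    fun a ha => ?_, fun p q i j hij hj => ?_⟩
  · rw [dif_pos ha]
    exact Finset.orderEmbOfCardLe_mem ..
  · rw [dif_pos hj, dif_pos (hij.trans hj)]
    exact (OrderEmbedding.lt_iff_lt _).2 hij

namespace IsSelection

variable {n : Bool → Bool → ℕ} {f : Slot → V}

theorem injOn (hf : c.IsSelection n f) : Set.InjOn f {a | a ∈ slots n} := by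
  intro a ha b hb hab
  rw [Set.mem_ofPred_eq, mem_slots] at ha hb
  obtain ⟨-, -, ha₀, ha₁⟩ := mem_vertexClass.1 (hf.mem a ha)
  obtain ⟨-, -, hb₀, hb₁⟩ := mem_vertexClass.1 (hf.mem b hb)
  rw [hab] at ha₀ ha₁
  obtain ⟨p, q, i⟩ := a
  obtain ⟨p', q', j⟩ := b
  obtain rfl : p = p' := ha₀.symm.trans hb₀
  obtain rfl : q = q' := ha₁.symm.trans hb₁
  obtain hij | rfl | hji := lt_trichotomy i j
  · exact absurd hab (hf.lt p q i j hij hb).ne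
  · rfl
  · exact absurd hab (hf.lt p q j i hji ha).ne'

theorem lt_arc (hf : c.IsSelection n f) {p q : Bool} {i j : ℕ} (hi : i < n p q) (hj : j < n p q)
    (hij : i ≠ j) : (c.arc (f ⟨p, q, i⟩) (f ⟨p, q, j⟩)).lt = Nat.blt i j := by
  rcases hij.lt_or_gt with hij | hij
  · rw [arc_of_lt (hf.lt p q i j hij hj)]
    simp [hij]
  · rw [arc_of_gt (hf.lt p q j i hij hi)]
    exact (Bool.eq_false_iff.2 (by simpa using hij.le)).symm

theorem allowed_arc (hf : c.IsSelection n f) {a b : Slot} (ha : a ∈ slots n)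
    (hb : b ∈ slots n) (hab : a ≠ b) : allowed a b (c.arc (f a) (f b)) := by
  have hne : f a ≠ f b := hf.injOn.ne ha hb hab
  rw [mem_slots] at ha hb
  obtain ⟨ha₀, ha₁, hap, haq⟩ := mem_vertexClass.1 (hf.mem a ha)
  obtain ⟨hb₀, hb₁, hbp, hbq⟩ := mem_vertexClass.1 (hf.mem b hb)
  obtain ⟨p, q, i⟩ := a
  obtain ⟨p', q', j⟩ := b
  have hlt : p = p' → q = q' →
      (c.arc (f ⟨p, q, i⟩) (f ⟨p', q', j⟩)).lt = Nat.blt i j := by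
    rintro rfl rfl
    exact hf.lt_arc ha hb fun hij => hab (congrArg _ hij)
  have hbot : p = p' → p = (c.arc (f ⟨p, q, i⟩) (f ⟨p', q', j⟩)).color →
      (c.arc (f ⟨p, q, i⟩) (f ⟨p', q', j⟩)).mark = false :=
    fun hp hcolor => mark_arc_of_bot ha₀ hb₀ hne hap (hbp.trans hp.symm) hcolor.symm
  have htop : q = q' → q = (c.arc (f ⟨p, q, i⟩) (f ⟨p', q', j⟩)).color →
      (c.arc (f ⟨p, q, i⟩) (f ⟨p', q', j⟩)).mark = true :=
    fun hq hcolor => mark_arc_of_top ha₁ hb₁ hne haq (hbq.trans hq.symm) hcolor.symm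
  simp only [allowed, Bool.and_eq_true, Bool.or_eq_true, bne_iff_ne, beq_iff_eq,
    Bool.not_eq_true', ne_eq, or_assoc]
  simp only [← imp_iff_not_or]
  exact ⟨⟨hlt, hbot⟩, htop⟩

end IsSelection

theorem toDual_mem_reverse_vertexClass {p q : Bool} :
    toDual v ∈ c.reverse.vertexClass p q ↔ v ∈ c.vertexClass q p := by
  rw [mem_vertexClass, mem_vertexClass, ← toDual_top, ← toDual_bot, toDual_lt_toDual,
    toDual_lt_toDual]
  exact ⟨fun ⟨ht, hb, hp, hq⟩ => ⟨hb, ht, hq, hp⟩, fun ⟨hb, ht, hq, hp⟩ => ⟨ht, hb, hp, hq⟩⟩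

theorem mem_compl_vertexClass {p q : Bool} :
    v ∈ c.compl.vertexClass p q ↔ v ∈ c.vertexClass (!p) (!q) := by
  simp [mem_vertexClass, compl, Bool.not_eq_eq_eq_not]

namespace IsSelection

variable {n : Bool → Bool → ℕ} {f : Slot → V}

theorem reverse (hf : c.IsSelection n f) :
    c.reverse.IsSelection (fun p q => n q p)
      fun a => toDual (f ⟨a.top, a.bot, n a.top a.bot - 1 - a.idx⟩) where
  mem a ha := toDual_mem_reverse_vertexClass.2 (hf.mem _ (by dsimp only; omega))
  lt p q i j hij hj := toDual_lt_toDual.2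
    (hf.lt _ _ _ _ (by dsimp only; omega) (by dsimp only; omega))

theorem compl (hf : c.IsSelection n f) :
    c.compl.IsSelection (fun p q => n (!p) (!q)) fun a => f ⟨!a.bot, !a.top, a.idx⟩ where
  mem _ ha := mem_compl_vertexClass.2 (hf.mem _ ha)
  lt _ _ _ _ hij hj := hf.lt _ _ _ _ hij hj

end IsSelection

end MarkedColoring

/-- The constraint of a configuration, together with the constraint `P` on the first and the last
vertex of the class `(p, q)`. -/
def constraint (n : Bool → Bool → ℕ) (p q : Bool) (P : Arc → Bool) (a b : Slot) (d : Arc) : Bool :=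
  allowed a b d && (a != ⟨p, q, 0⟩ || b != ⟨p, q, (n p q).pred⟩ || P d)

/-- Whether `200` rounds of path consistency, split along the tree `t`, show that no selection for
`n` satisfies the constraint `P` on the first and the last vertex of the class `(p, q)`. -/
def refutes (t : SplitTree) (n : Bool → Bool → ℕ) (p q : Bool) (P : Arc → Bool) : Bool :=
  (slots n).length.ble 13 && refuted 200 (initial (constraint n p q P) t (slots n).zipIdx)

namespace MarkedColoring

variable {V : Type*} [LinearOrder V] [BoundedOrder V] [Fintype V] {c : MarkedColoring V}
  {t : SplitTree} {n : Bool → Bool → ℕ} {p q : Bool}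

theorem IsSelection.eq_false_of_refutes {f : Slot → V} (hf : c.IsSelection n f) {P : Arc → Bool}
    (h : refutes t n p q P) : P (c.arc (f ⟨p, q, 0⟩) (f ⟨p, q, n p q - 1⟩)) = false := by
  rw [refutes, Bool.and_eq_true, Nat.ble_eq] at h
  by_contra hP
  rw [Bool.not_eq_false] at hP
  refine not_pairwise_of_refuted (c := c) h.2 h.1
    ((List.nodup_map_iff_inj_on (nodup_slots n)).2 hf.injOn) ?_
  refine (nodup_slots n).pairwise_of_forall_ne fun a ha b hb hab => ?_
  rw [constraint, hf.allowed_arc ha hb hab, Bool.true_and, Bool.or_eq_true, Bool.or_eq_true,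
    bne_iff_ne, bne_iff_ne, ← not_and_or, ← imp_iff_not_or]
  rintro ⟨rfl, rfl⟩
  exact hP

theorem not_realizes_of_refutes (h : refutes t n p q fun _ => true) : ¬c.Realizes n := by
  intro hn
  obtain ⟨f, hf⟩ := hn.exists_isSelection
  exact absurd (hf.eq_false_of_refutes h) Bool.noConfusion

theorem not_realizes_of_refutes_mark (hn : ∀ p q, n q p = n p q) (hp : 2 ≤ n p p) {b : Bool}
    (h : refutes t n p p fun d => d.mark == b) : ¬c.Realizes n := by
  intro hc
  obtain ⟨f, hf⟩ := hc.exists_isSelection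
  have hlt : f ⟨p, p, 0⟩ < f ⟨p, p, n p p - 1⟩ := hf.lt p p _ _ (by omega) (by omega)
  have hmark := hf.eq_false_of_refutes h
  have hrev : c.reverse.IsSelection n _ := (funext₂ hn : (fun p q => n q p) = n) ▸ hf.reverse
  have hmark' := hrev.eq_false_of_refutes h
  rw [arc_of_lt hlt] at hmark
  dsimp only at hmark'
  rw [Nat.sub_zero, Nat.sub_self, reverse_arc hlt] at hmark'
  revert hmark hmark'
  cases c.mark _ _ <;> cases b <;> simp

theorem not_realizes_of_refutes_color (hn : ∀ p q, n (!q) (!p) = n p q) (hp : 2 ≤ n p !p) {b : Bool}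
    (h : refutes t n p (!p) fun d => d.color == b) : ¬c.Realizes n := by
  intro hc
  obtain ⟨f, hf⟩ := hc.exists_isSelection
  have hlt : f ⟨p, !p, 0⟩ < f ⟨p, !p, n p (!p) - 1⟩ := hf.lt _ _ _ _ (by omega) (by omega)
  have hcolor := hf.eq_false_of_refutes h
  have hrev : c.reverse.compl.IsSelection n _ :=
    (funext₂ hn : (fun p q => n (!q) (!p)) = n) ▸ hf.reverse.compl
  have hcolor' := hrev.eq_false_of_refutes h
  rw [arc_of_lt hlt] at hcolor
  dsimp only at hcolor'
  rw [Bool.not_not, Nat.sub_zero, Nat.sub_self, reverse_compl_arc hlt] at hcolor'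
  revert hcolor hcolor'
  cases c.color _ _ <;> cases b <;> simp

end MarkedColoring

/-! ### Certificates -/

namespace SplitTree

/-- One step of the decoding of a tree in postfix notation: `c / 4` is the variable of a node, and
the two low bits of `c` say whether its right and its left subtree are leaves. The other subtrees
are popped from the stack. -/
def push (c : ℕ) (stack : List SplitTree) : List SplitTree :=
  match c.mod 4, stack with
  | 0, r :: l :: stack => node (c.div 4) l r :: stack
  | 1, r :: stack => node (c.div 4) leaf r :: stack
  | 2, l :: stack => node (c.div 4) l leaf :: stack
  | 3, stack => node (c.div 4) leaf leaf :: stack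
  | _, stack => stack

/-- The processing of the `k` lowest base `2000` digits of `m` as steps of the decoding. -/
def pushDigits : ℕ → ℕ → List SplitTree → List SplitTree
  | 0, _, stack => stack
  | k + 1, m, stack => pushDigits k (m.div 2000) (push (m.mod 2000) stack)

/-- The tree encoded by a list of blocks of `29` base `2000` digits. -/
def decode (blocks : List ℕ) : SplitTree :=
  (blocks.foldl (fun stack m => pushDigits 29 m stack) []).headD leaf

end SplitTree

/-- The configuration with `i`, `j`, `k`, `l` vertices in the classes (false, true),
(true, false), (false, false), (true, true). -/
def sizes (i j k l : ℕ) : Bool → Bool → ℕ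
  | false, true => i
  | true, false => j
  | false, false => k
  | true, true => l

/-- The decision tree for the configuration `(6, 0, 0, 0)`, found by computer search. -/
def tree6000 : SplitTree := .decode
  [541425939252905575678805655662989339668572185092034016224504772364063]

/-- The decision tree for the configuration `(0, 0, 4, 0)`. -/
def tree0040 : SplitTree := .decode
  [15]

/-- The decision tree for the configuration `(5, 0, 3, 0)`. -/
def tree5030 : SplitTree := .decode
  [19065498207804201443210165298158646599619117881577745159580200991762183940550179281768920148039,
   12065046757778252228843557894917133312451537840296054062]

/-- The decision tree for the configuration `(5, 5, 2, 0)`. -/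
def tree5520 : SplitTree := .decode
  [328844992578317054084007452508997847117609377104101598953597002759699980551749792608123661708915,
   26321466166883711059186736460040733308291227015290081520733229521642357185563790503348250149201,
   410180921307434855661796618956887007286324004865219875710776556225419716615053513257706352054027,
   371632707526877719742702996725707594030681489867161919590579104214286984004509137064596922755545,
   412373539126848367318062415769290998862342600205374083306381339662085275959334483625845511091212,
   287348147626587131501276620218440883121167404928893042800339872212203144004765139495220922755545,
   61475209958619158084173113087082329434044931460502323310645288157190657666496832247251674117062,
   244418348753643018637306648083865557010221499188036288569397288403993120538274259601088484434225,
   162482390917759746202468436163960822456685579458258439694035872214280840004774998080785016820902,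
   71415380601743488733671607349155658234872139944529447315917530721311010063490724080296201034593,
   319476080832717514735463306969271172916757225282638730089583810604093730055876164441802854380122,
   191554207353385912143679557402335316860287424600860373771104709732359234050450985686090352909225,
   36072540732127267825799538512874887864655618540929827811377919044802911247496162082289769197225,
   368995765838196180822639061673565054110271930797167356335285479009428046285670089252792720028749,
   3493287357229476251795949084615132842041279316591009898573876365318404993665264536363674125074,
   58280708309200078502495085723687157616089112585788706466246028055431179015047748264456544076050,
   13811467695835578994522184581513372619313416457776224442802264114179614978432800816688392266242,
   13695309402952503692561490396083709558658042759301047194069004301321734555777216400408152026026,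
   10202293905023566449868234863724753093149755624866808127672456315449629312768832608409736076025,
   116506089857097513675369062961570186299511249733616255344912630899258625537665216819472152050051,
   414853668116386879411180404814233529376839962136643719403980927015959057039431203664096104076051,
   24175432191267421194228389158859581456924418936621048992116749332186224697115694503349505825035,
   284168272230837106480974955295079930532728079188591010300088456216582660993601248400312440532136,
   10202295520450583480921858636795360346648221909827887304904766508776053572002241698099690148910,
   74415304610926281820897424717145709491798832363363614818500622355469071872897216818128936562277,
   277436437390943159502613214675490846017324778782965866606845964301321734529793216816296204508281,
   25775046590167060382279085904158009343871420039807279306547300389398284548994720992571425812918,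
   10207400754500189195092743101113965492045481182020599914573876354094616835200864455201008074051,
   10207394916867663793936357294299430921778892181708165441983719890193052494764088720099600192026,
   10504701217727099954167927551315963053664726334014243856408702989321734529665216816992360266028,
   33860047612840787240873165238861877112814345402008355858229387310110977537665216816384104078025,
   33860181808537360376388412109896580360455979895881859916026139661876495624072896624104200244205,
   71698181763136112196412122]

/-- The decision tree for the configuration `(5, 4, 2, 2)`. -/
def tree5422 : SplitTree := .decode
  [18798818655335016768986304727857777636818361552847339823624574229090845327490785185840964452267,
   68232706150643170110515693301651273446343774636445288293286429973226505486216134053577561706865,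
   148519604646670823558152972767964191878461615408515014959575289102986523652743363857800988120074,
   51835577046571751519183541223438355023537781153169836791188210832106505478280134052329561090561,
   80545418618805656468750279773472827909628694045155699447632132289641029262732386145176200268147,
   145234076585337294118101090446638337244839658430946643366111459605051936536706240992601544127050,
   245363187654137664346983531837676764648456467587746906419482777750606389787785604453966117058372,
   249206007569648905709942940762144607375125929310441808175894751362144027928801603072882118090685,
   13171198167369788268432381627826030570010199237415807997496074310694437651597446949966116600529,
   145315546230233366302472437764232599600269176939173356430740391986234890008717121168688972268147,
   26337550008455443187208613498475691426230924543559516480278947877398047122825799203696769058222,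
   94001016967816127258875243018653832334576010831616224297562425574518298145868104661480889394914,
   58527121389515771319211576996901540608089395110363677565053189176349199649862977121809500360024,
   77617327004727525192655541223438355023537781153169834434793597198903816974476001760912489058066,
   156059968680575117805435843295510022111498210936408361129151178275975432471938246032496444386205,
   146459258697777543136573938270882376198166501704507904287803459775505968259971552417073688236425,
   285222102749004415170901151108373191092489037618384585933072816188524874415191974914130118101045,
   156042788017663810348465091988958711761342372808870185342485034341137987726219969121744445082697,
   33066425338514510031964107555533295730426910870832235111002425571955258497677505891401849074549,
   7367281226334532228142413697462061501908747946885318042341689572389656579140258209160440236266,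
   4346642877827020480571389656509760956666545420606722254976057879610377473664416608409592144027,
   18810092345708780602343096893073275887629742167818372649013605560927751812428482353544820146039,
   37063692879388643584169520201240447574750340518726093887031349316111880969353281761737068266062,
   114143752161466932918337025912104784894419934154342903993110598694455556871043908258225492770423,
   13171869123330830325971525103550518968671287116382625943656718354957060739293206288129408728026,
   10755943776999777189519457809000965683191222833792565506640069664313624969345985121065064218227,
   18808606287057183141540995185974447443291801556566433855627448326193690377609412834312541825393,
   4309464556730388272283675403523467257453810094393706189723026990396429952896832592392312124102,
   10207264795701634205498294288809740220641647170046083518544947749690797574280134563025802164412,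
   16383829007890457028914011267260238536511916507759010041997390867469058075212358995104104698051,
   6986168048137525659630781360956276218273667255584924733692088455319821838722336976552308076051,
   13436541789724246929232891327154332654660485973754848339104495634947590528899489939410313468037,
   68237726271987917475874395504431346747182364164326269714536474650116151958539648419369548148111,
   163597255194561384611471134449440663283178544074426510911290575309583236153088494603040062736098,
   32780013569463781781345168152100620223778001324376572190996677737035302547606188246217153108562,
   18820950429815091190511331397841649502177016030073342400296008217794565000833985744312868076110,
   51546193486564082005999811108696830250323939595109483335987501212790310403970242128216104268061,
   6491058311816128652021904467584649546433534116390843287373202524163096845188804706416568268039,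
   323915967174048368680193222796075096093244992654213333192976532487686170258500708706889780294184,
   37064254727958217758884699029162181540471509256471724331135208565821961346371937888866373474278,
   26594843510394941227615768047394037050706014048322331074635902507837702663831864465840292156111,
   107697674858642608970314966759128012737898755302071586411286604860425230097062593376792442412086,
   7036393741710233148576558886362388376722481693491806613537128634374710427981446944289115058398,
   154902567129471164678236377894322107111186249638366299706159179820572294404739168208400820612457,
   37064254727958419085476699041902397507773801793427448250519640367804706577820624801928148250147,
   29543752489388249092846673704094278253425197976911987892840761741891619587331928465840968170111,
   13172803082675604786277423143473657154905379647933318062207050820664091928705986145832940148146,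
   39220709208810622980343659035220249699169473233551786090793113998060561191430243121560248292219,
   58974928262373113499534898711571736828577452689823966659006526532667165463937954145736892124066,
   30637535593222218288229423143473657154905379647937937959093014627889944972481986337752196290062,
   29543338689257002594728673370254139264877808125839483130083378246693147909511745168496312220118,
   333313756390187385147791288192494213810759295866636026106130680955999751816582947568496264292217,
   22829099935881640256018537766753690748984298244049125896646915208219913477510947681948770067070,
   18913497184609854328698674158517149507392244490981722345992428657287197455586355666016920484078,
   61772653641059053929693956029848019871249024361191090397655114871863583107140418324650373474912,
   62028225139280174169490040368518497601592304275130315039896597554241052442257609957482789084529,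
   333250869827066981124209178192188032992677858804941890724923455680567581455490337393746901706242,
   61505837513218876714725322900251506414603628329590169887011276952079900098316353168880916534894,
   73609057710751751304502941258892282743756230203772195088806455413858825348995553184688393084242,
   13962143108759482308678503589340626908887785214018134926127183903761930888519204626385212236122,
   243363589383379948764314494127357752082360342938814301745303787718190148608774211297176160272015,
   3772868257024072456375543806435555577437160704360858202827121880094262427785153988650373474749,
   10488716150394941227468572619497285639232029524772003897569400894532355095171521888977068412145,
   3772868257024072356366886398812256524726055639092275024818398323380571779908548771561609108558,
   100131669446075197470613734286309748642899105552007381193000974392350223633088773793104588412145,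
   32784975594667612444266064004522272930399925766032795378477443267189051181142956440176532276289,
   55336636942962708785485872970099486417301832783955396001845298250243598087555908272193448220118,
   19875245111663468535142036956928657607503380940932276322576534678620472969413888386897224892147,
   18800439903452714484804027283608718390595553529317279245371622523455279768669185121744920172243,
   58554638797319621820300401355289804678118115673671410586079475842124559633805769253963008746062,
   61775726741053047627315300048018016878355230660660306240415828005955139736903108065928900492061,
   103357598047687567362020920833241897277861551706626042990879102149597805060994628307604282044066,
   22851130902311511922697608379812046976979705171724019241111786616418569541474637844529492462217,
   17808696293421851049453676625273650726481721034442856023206013301981218055043011553736968500062,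
   22047842195741190485251858537414412506002252109794330153120207914002977569873315681777076850110,
   22870567640610729084102700511123226521636049324444009681523161465455967921732485971087465704078,
   187130944819274162174326701546414898704835218048254845231280362532447516471388462416872248140242,
   103087541308105942633714610121046936115493669242177372606918878329920799001420900836631465704864,
   19873625029289842124643914465091272582107831668197180928250140892310111457860231206081785370697,
   71169513929218876714724688115592669207301263942261575247726654501905949325959277847112248164085,
   152011557620175309195526478573395831432165859891169052202732430367761949967496001360592436196257,
   103379117510962717742610493202279972742335683276508143903175043187255601294988483793833016820097,
   183971899132758651995469719741414386291446258667209310544345397543967287077523000478934816746222,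
   4028546117486301598093534178582213954634715761016958058889517212790366363972231206081161058541,
   18573998553817754190037034191587219393908984196666009281661527343845021849985953185737492774015,
   187130979806094685013237939208224534703257830340252020184148047914211911843415726304691608220061,
   287794778502041703800208414405311348619484139455482971706208369941010954531394763414825597824062,
   19893374035570153699384203410640285041975112041726625338157468785760265006428622502914788469085,
   240102366150613202045027790806804818438657318487100606059655756145812790051922729495156932812061,
   106891140276614722220761849692459070987200514035974652261435619764875630754631489319122245106741,
   145254994166781057687663820394736932890633177072850513368224188472351516952716454386992872844405,
   49418175972596394137586007198104931010507979489532117778714777756860767900425420166818113090928,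
   71673905288200695996574540874397109512730207100017968685873547468644401540492070176312588100147,
   58835690632690015379428995038822565951581790737025484280596911374986570412673248592392440408267,
   30620174105723929994937879704613624899362188592104030544341215347234618371203522130128488746062,
   68212427260680987060943846505498821558810849248379388211400771714104879876481985200225408098110,
   333294597966852357450187120458131852004071404157442134222975103026192928526219969120496300196066,
   156059968692154179655759360806280170120067521891961848078479587443808526609293254176496301451229,
   100404259948227795121881947175948140422770203232616858165555410070606393629248838755401780908462,
   240102949963554612043990572470486793987035105691206173712839039011855881667234011072784264508222,
   329152070917809560679358899966660676427715402976946107343932093882978825989260449824584920542593,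
   52637790831555014665935142728738806487084251684246170572286747869212253921899605718082277451229,
   150939427908022856126365951992047637897692123664254845182095436857053554489667489377928508222012,
   103470061832875205658119659147352459278698504171234928121269109957140017795970754032977112812430,
   365725215514518610310955500962915578035848282932003947111002425580660753033099942198187108360373,
   103358147092668396107008469540835190143992083191975225566024408126572083995539155305609540157050,
   121612272405511308932167540340295792337369505661929612792600726459487265809805899932238213480398,
   152031288030551960700102700511123226521636049324444009681523161465455971474446402306985512770078,
   110872179534141966890532283356346916065275430905092061306283226401859890960263117840504392508125,
   26361741153783910700864359589340586016645593510055496438215038002241800082571942052234164772098,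
   101522026731286883520603771617091364158201737975975203023235160114192924430665510049800869782710,
   150939480474497797147759210794172041163736942579386303558545949727761948051387723713937016444373,
   158391712057150470300985563699761691772587344726344911982985517212790366363986435874040488812430,
   109041473020103020440306877656523187170452856418295230161752938026300722969676998756530297162585,
   103889776099746653397089459084919937185898432761400338018697365881535862971277389656660948796401,
   18841107987069272626330803243266361291192807496074347111002426059371575588247205952313632140377,
   49418175972596327028731255652063761460414200033269842485555501213029685783949897061805541082913,
   78961165188715043086416362929691131650511341552845210149165253736988174599560512628868835088012,
   124095169306713121489011122012296351075552077628219901133566019619855881623938113120496300276150,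
   3772878259126245861714085159185707187324137017590858330145124582507526401604290354888104890457,
   6460311770519976256018089087474913525505918599988298330507473976350223633093765632208196266145,
   10488716150394941226814252639199438868852518158762385953064974392350223633094656225072588562437,
   16651871348754622584409278264715579539208417611518189875425428487236354070283520416880456236265,
   71420353837554089463374032357351782647865218832007381193000974392388378624899521825104584532373,
   30617489482692106316564012470668866672179637565283549471484299295763218690501891136392824220118,
   39217762187943357618556546334128322392625389710957987505294185915110920983884352992601748416110,
   96919981364096598608609953670347949000899239382894552092752106615357727376449255040096096076050,
   30617489415618401489845204808687974631998366222303462162857998392349199121032864625176200294349,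
   23139004572971577161877609803621144258429589264007381193000974392350242055878656225168876048110,
   114101328352893945407524433504349387850756457236631790478420039724087581337419971889073492770070,
   232112035327404309352563941809249370252958445121279896649777288262693403790788258209168868462142,
   58527255613384365477607252470014203135794225678277545576151283125978482095937665760913064242416,
   113336835180900701432789768230891402439613035255778402799890577552479501592204321312688964492229,
   26336488079039467750870469037133887256980778293642209398927914263693618840003524256984052276150,
   164649883600092524878067617128184908889596498481679344050950538282006046863751331488496280514262,
   107123741661532836153606168207630112422770711495739220218009808904227347212429609298881688900462,
   10515702902248216352839801851133668886193534613146821103642777735752247452814796292896585852853,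
   331837924095283076191911828070267980395322610094393705930803214375961099525507010129168328204109,
   28467316910991405624934497544856670096225612109417377928999983641871002454891821703307690483865,
   48622942655113990049726923390603338503051685469543542381014263410789689114189606867665396290062,
   37080217238985139932251717447499941956295200244358361225975178955617332378443205792200056226150,
   13161663628535696313133641563672952718365098475775496292135987817820845625762222626985588700113,
   3494630421019652208188608710992989785563997608103528617101932901049697585412804898984100028038,
   16652402505984448201035664909859936594599488685245088292890652350572855973202987797993392844026,
   113283252966660517640722762971500517787437565116646605591072998521372163465609798163697833236349,
   35707151187144618107925404462034430642708297327925142930472998918694424851588672434985540826437,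
   110919969961496761663068601084550931635944644055959175225399311372803601673605796706408296132082,
   7372673364306251016015915889256338563011841528007073849793464874076207645440832208296200124071,
   248440316296633484033364433450457746716279605958822699311296596036099590401742277584592344266014,
   93693912568973192449031839827482413370895141488012347188441868762147385110337985312560532100027,
   54762713884635064028419640714746475585475055878794425141081171500425846537609797971697833058618,
   246568910893314021923526457453189801450035741524181311590430746630665478403970277573482949466150,
   23103301114261402285720784397906597198977370490373284470812751914020381448576880711203649845020,
   248425496852760066728863333823594261741486922336471404888852837413912074504512448800217784698074,
   10207453733473546216734014227048309597342697079741755074407497146596353977856499399117591384922,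
   35703796442740538137078314300106183400076415801315568377582977180770563200897216818449540050014,
   100178122499511173567384165770570344250497371539260580094144780442115612039236420707569396124086,
   7297846373265531248000134067493390595676506490242113593399411788878394646338369377160056052051,
   100183496964347353725502006245733708873737053180627953357695437028487498405971397584592344266014,
   320094577355525839000386554185129924938643052967798572668769360502076080184891672577000600562306,
   287618194025764499675465245727499776451687616054068101230641192985628422279105184784894226800852,
   245205382184866516626508193286603944104234021501558173886583728676573554490013230808452178044922,
   246547961759071723653090242694794455028728791531765882941471834548486258501468430615379702142900,
   10592234133255455310428511457017950670162429196518092396647484007525902085442209296712157706913,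
   10474277316910074651703269285104422500833567346755356402504627434015011458529619235456158746420,
   113336999210494983833224212836812619788850693380869541456606578446571146396494374948425828124070,
   232476678309708153814771848566033106719806229092516479935402024460638366936678798615379702143380,
   19869538767279663678396506902556071981511953649336820019275876385848903460439213655156136156234,
   78385186819527708234424512862544269465514298247106055153159711330568561936258627553832936122069,
   244843892269340663839281442433654142653325190792298996043925662831163139072768482176120592030180,
   62027122468701546377799767733375676489391577252391989537191135927646896283213889760699410171241,
   367941421067287652926381312007859840513363544277992030548283626615373684888651970466312872606217,
   19894975382416858852433066123664071124620495849785140171354249368143342924321078104564826437358,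
   246547537700978680727672761425706149508562225936811966984768095290399265807496131556432340820062,
   13977175834663743020333233468570213924002427517443387058023342154257927821959264993755409804913,
   245204845096850490036349699350803798310546453502858023758237043131098484922781513619656580138063,
   40304798972081335718841149572652276965017481001278721693529011329046300455243937058408253704902,
   108234949024006741573060605785509277002930655955845235139106840632388389655118242354880832028138,
   66064274078724376628000842696430383890423230371896640426144056357909041816707524258160868484397,
   22150434206370597830518370283365132977730033813657496575725949121770013317001761184657556772242,
   51559750040281754290714529845258494566809317573887731191959697525347091209373742822924341707082,
   322402531893894400314048365826804077455170760390302876000415836202009101966795558803601848276456,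
   248311123004120026963087771552595906150025027445220905095664023607907850884738627697937018412398,
   16672400151048355255155868561062984004855821548232093368617031711287837059975021639219653836922,
   58291224095028507345335087413802442233221810195333235253555501212860708015959430371282216170254,
   501060617797589144334892759641687176044092459824784061405004170394129671812738658465832932606913,
   145236742419148710262989469745691552483826272634177275384600717388955231881223203794352536594309,
   22150359574767520935315224779668646536680967669187363321268950072866542903323267668232296164254,
   17725063342820657243280679934892754676127700748502222644710002756133414075485645848683412133082,
   55044577228734542945803148152950786173365745304951631963884628010048031001681840536585541788913,
   33033811299737021618556554722736117242850576516471631963884443683935537411970400208400440276150,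
   110108628252677612062944396690077020339324134295487668281395312700447266188288905216400056246208,
   141743320172194056215848248564347136118099095127819174371610899598366994746013633058096392508413,
   31731918606331762673301284253148982560021958362088044768330638490250594594971332663156202413362,
   26593136587032843374460874411950182024504286151672381743573231825945347203203522209201076722114,
   22030637067575200157829020468187919387319780522215743895335840199266609933889985120592916468410,
   17837740768873849421686060071561236588022607812805837398332343770129011395233987664624868450233,
   6457222821853495432793278397998018651780682163504096404345439609460852066694146401168617858926,
   146680400474404293825438775736565516215794343420386222438183840218128923790411944468336292158749,
   93485332782668133113058872802736233592399076560685416997472573371589639812849752583113205228541,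
   80612023607193047068925045389858116782054057294143902542565756963855881477570403473848244150147,
   35720994122678797891840810838696188498286878429267902865543429133380879488836418402257732900308,
   241706536798761492611940376199157056932681222259966757623911647848592678536521281008593012770301,
   36314624040755005125092396228542609341289995377988412334205005183595521799748418402353224808864,
   284166636341022309779126349795103887440755427358361544338161891562338692101511331857977781826374,
   109574896027993178012856931651203125244355243312121700704456784001595147526274128531083578100078,
   99867389036227409916347948445337839325211920767141619196033236999196174599556804256969176612416,
   123488502089876072960849540228882604087907786067690079412513066053006062946332452624795578101362,
   48344692046680223792962612709352724782144029524773781954793592969836047488836418402257732900236,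
   33583710334850466687760883344943099682757607883178287313453150214151172867203552640400444098111,
   104423143098570438964983657527456058340827869648866504353895488028690973440843974071253509792062,
   243325124321725632327708631763458834439048692369410306281623787717731585669572004504456296460386,
   369844268130756721312742374489770171069891413214020608495669532783162659259490739867179697732894,
   3790595664171699663957762584391738459948713149219728820032423385830407949952421984220201778437,
   13740434221667715382818103114085201463828644641017274622103566349321478585761710208688500242230,
   16669037518368528269070897700704375962558902884238115857224596073819845825538753808872968052038,
   13171869466666253544388991006169787534973338059391099621453896774731343143169986129448056078145,
   4041166004022501550701905728005737825973451564945047662647757036596228739209412899648060030026,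
   71165207289277031681343149348776327521770471883161925758025851911196449806220742784688440146015,
   4231617470392147932122513174224716733637329748197679315047310957174351202737793808872264538014,
   6984291348536928801997169154880195537936129396197310521397288551734558725512481937064584772026,
   410723033025601576161623431737212821509998381827654173167839479815233052430400832624592500242014,
   3499730546808194686458672511459004365464666618331262617445294635877747256998148065777640757358,
   6987648056490771060488330234177785433295356331393622270098162792509981320854564224112108074026,
   16652551890751707100014002163474305910588393988903446777960976564233729676434601491473492770073,
   120958844436412036513567632027756539852908661507654525423644710924813110294528832208392152172073,
   9939017378301936400394149475613039734721961865205428494536931443265074330962217188528440270294,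
   68212425650608143807019248320024431572944647177019868850304083579744646683505408992968056436026,
   13699072131862359387041539778432489498091265789413147570432124047875619483794889492426984794098,
   20151988231795970176008241409963337915573872427207950447366537260050691332032832592408576050037,
   6988912146137229981628851355684536960689776434577507057840269411362308739268418144304100100061,
   109042516955251419103308835763493394715800764907749597974581320774731321629569671296120056054205,
   165898484680220643684547580412369662122423897890095325294864532552778499208513986322312280436422,
   410182538498016350042121796872851445785041895886718747546143127565956122627200802210897176612606,
   3761588529668553476990533085786806948597019654593708335351822447110660739302439404438775410618,
   19880465035893844279132627746742107113260713233810113505383631635172037859140004499498374120121,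
   417164939912269965627161182268320783541732253095866718391406714887187987726656800624112292052039,
   273924978128307421737189604096802847756256156881341522031449474668566047005587790241000600562306,
   417356472635887648420837485210270967274017524484031561781301285914389620795165453863155626483397,
   291416969520480257796917198802584959308928259002173933279342139852830977793665184823380330795542,
   60427107010075840777799365411611351201891421718348743741519909895196184711299780256219410385073,
   58258820153569770173972495818858456162807674079511717044498496955108980026461609700944580588134,
   239992844484464461799265444970969489505261848694869608294097785289960052923219401889161176268225,
   155255870264208739742114334860913954923902220539874394370837395993871879812226369121065165730397,
   68237830141511932611024240169326806069033383006013277151711550483468558086019649889104600538425,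
   39468338233222898750405044479352978783126975101437681913998222385690567010332632679312388204154,
   192630169067103493550359638674837639547599416637758721693543342270992924444546241376784536122078,
   158477994255266070773551976010928455272949483636032061792416445713641746194498030311251653851214,
   247240071166542610945425302360297071780344443241644680003635251256344078599560614740650373468121,
   329268057258978164877710630768300017590211391423612698878727054773470019716235939553736901788889,
   103626023370051302702987736062737572808497500588445288292647213124684071651515728585515578101085,
   365769082699807944406827403202478182003521423478328305784670292046863881003917121570097017132697,
   197047915113108166884570916244840594597528071899460028241131045322122868998211266466033645789206,
   16383843241013647535747119864559533825856057512300676563046413417500172039299780243401749162593,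
   19606397263163747663364791514239676489391583138628739321997403214410554638230699479305589732141,
   102388545250857640200373051210190085693913313223138681168187455524015668496771140115346265394386,
   25248779821967952732733306981997119838244695776566395130003000082660980024903214624795577812889,
   16383834114208142889391898033768179713193942286566277620082808968750362391117606996650373468013,
   187151336250824591182936915841841665185423959561030083469903964233374363703428644705072888578141,
   240102958598146664157011843604758631401273760711739164152892335146023431940501958560785048508566,
   117384314592153523980833351519303663372749639979780586972398479391250375010332622503112901828099,
   18809555474729436434437735801024493702101010551685628191011039348227841920960901761456552300425,
   36220840079151991815651467693543414843598254048232006664316995620700171027521953105752264610062,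
   416621765598523750409125862881402881077033180371504449024521144011700764473987137060555604124071,
   194735766748204892194465061771888142368784676608374424463167588385977715331970274400656584309866,
   240102958598146664156357205024579260254127082087929752572838096972821010697915736832592344196066,
   23097401172779570327708244531946818160747422980201726875471974172041330488905254103248901828099,
   60520659299338900634920894732910520030206325373443188250325214399072878984635714439158192122066,
   16672821263364911668961982181484671278911720195506979099068643519072818841164326263113156762906,
   240122296447646671818734210095549836176407857530241827088192576029203998992262947601841637098566,
   285220327653513860273025422265989302896582592499256501834553497642021395831478542872684966795550,
   40276334056788847111142817127935652776447215062327476473991313523217693445511649184688392132906,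
   117041087427408512037621166259616878443365348940710012715039191047714817927954569477890992912192,
   246432210385405186937488444379780267405804964351739872415887423526505217920965888224880472244267,
   103399999642019230845024105554554938466842452113726722304756102345319789220449089252948202378913,
   77700528461182405824768333019626480450540803026095247071080716338192928527234369376624920484234,
   61791853806043148692593941348145623826309059187409994945146743179491847812593752583155625778225,
   148725349403075245614127416387602327334117028184588994138937424022606353029252674256592936578238,
   248385753096556533599608545116376652175809335069002088997325022239761929615496149760688984802462,
   35722600083599725309816711521183740865494485567816179982477389261844999812226242337147625826462,
   33428819649755165466345045487721765213594789513544778920782297459547569357826374163128280762397,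
   29544287678790657414088697593206981789651829229027451355167314221059846664836806803497801474749,
   71139032604834802900128009054866403507314500149511716966477936700447266178371521888977068074014,
   1903019098337352748577281216209552440236122]

/-- The decision tree for the configuration `(4, 4, 3, 2)`. -/
def tree4432 : SplitTree := .decode
  [145523429074397752671281992499881577812859099328124996341903591455758854413702595504104152194195,
   155973887325446438204112126402198259678087880019362193667237986322978564744599244128432841370070,
   26053560602434043967998127054638825348533459820889752441571712006665760518787107106217692360408,
   113219769528011584505608793038804545447410933110688654844004410400290573574212324800104152508106,
   325413301354468604905647088126164220519008829869164971725695558953536529673608644451601851082578,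
   245135430031254542607814406945752939346946692874636085027016812674057489198488750119436778483549,
   145346149411015425936323299421679577866970211883895892137808819403879990498436672208200156770541,
   334299994759093881570030873472249553859832542973616686814087562517100917018962606803185627078385,
   3493018992942210426019273286211093940432353420031536795930739767814931731879475548470777770929,
   29261523906754902095707247628204125855102377701286490462678097992780334235472558631404935076146,
   245022360743407575003038171569121161126353371988590698848415819805205267731879475548470778490729,
   115207297955012076760100809749836605443821415997727286891638323270731321110340256992560056055229,
   93701832150168144825140325916938866003151359475963383355190121915666826957415723913835024284298,
   14508535586159419566865361522406729729180509476834689186262733187623463703884840468462196850446,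
   4192073129094014957419722673878697911719402196851856301146887246943539361873848801105784698050,
   7414425170053557304994597213678922590523044174646649282758841351989661388811942736880196124026,
   333356654009183077725154081632165052293583342077529171399373207759976758935885472445633684054421,
   194172567877950896937373245619172985894910253379327765247378137526461040942871115669978741493068,
   184242197681161212319063549544857040417374629572174097197099748583487618614806795813866981374734,
   200078146432774432738094024254395441838077401007669362794945415625903237804695915541885553704888,
   3761740007628400882679053782811702233558250095806301742904231304429189808451488224219409376733,
   184822982229014560108920109813399139214560729842623032387412078599174660744836640912400296172099,
   29261345504388607097372561645117876561165309882488966821593802103992666923863627942059065828891,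
   203307965602371433529223854893164592202695805125437131520092861798063710145307275173866981370074,
   187201167086525766091811553239569251021927252769019964466723566973615369478976448417756090092722,
   190682774343576815687106479104819654393246407437883059230233360421915933440896832629476182114710,
   7342925268111971611891153917494955640886002516610780579201774973618779054230700118138738091057,
   3493153247826989737142839817689814579442500150985621856391279821426247318337985120592056054013,
   37139412561155619100769304763752277881258902356612792783071287347736833793731012005672344202109,
   287060385303689923596560874658966727257236317607906920227047512091675938432897600928200248151216,
   370989349697860495408560632547538125043326344837355498399785710974729862469473419557834989395058,
   101247150702988219675572204236811832704786574542652285030428712299196172041864004965675029501221,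
   41380771992052283680020327156711319686358370026816094605928647698947587331457984912412865420373,
   190687737982618636973844246440649127479401799135188799006503821675193197241757228263410913833241,
   17729760156013166491794021654010553173804713225363819259312830828250204331926699768170893368696,
   27122995030338960485307704029242258581628528433123018580019214361613831427970368608528396226121,
   14497397770464843224219413147320080414671766356607893950574960836654337794368872276946116052138,
   194999080987352060780327882293641402217849325793549799725223126651589811001603620307402324136120,
   10487524575578189306752292415890525785562353140597277462556697619996941955459234400776056052039,
   105548425156851341134551006832551859116479681005486522425444419654680835330496416432968056108026,
   3493292394018625055417750822905737124780511662391411757598935171641627782721825104489444826422,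
   238757024037659482263941318374364828560211403495616910290337945756764475165328553890792248140134,
   26321108206791336613025015342149332990476050673949642319643350386394483514456299733979473706726,
   78128964313581247584753523694544421405989669996299346509875463305798956806275424402057076554350,
   26323062278492468875249282290080556569488603142423437713658054786563075074436290339402277162096,
   29267791172083893761783678172698531905420013934986395763408996406809101698381222803498486760111,
   65021145978109527318642580415236312455607499496050032799817829426182924550851137715305701162408,
   26847171291001069820367719550455272210708438388609853902922111013986867080643521554065060436230,
   106621647837920883403651815994107987234130300476543804833994854413831090177665185779657844700465,
   156017381187375725880235933528952523990504976849079477874987243643978278684494902112592344778386,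
   23103444199587052231619730726919441271645351478135791886479423603767856409801414611401112866569,
   26321042565155400036545042969753437940116359546242122326634951918433849614727750227089588806074,
   60428909228785115678701026033016508254126877838282015318091877446764858397453222924384156078039,
   15328351151485219670161663721868901227107604808237457641623788915901038904476622439283716434213,
   243327272699932105516216870490220464268512397131989500174487787625015836952023630802985544148049,
   20230159411582199823712723590560930362178303334367732265562425571957051558483629702946741764894,
   190595760227003392390905119092371411487826599161665298740609767802133890608024224928412329395034,
   82201007109323747132625176439062459416109549394218592688269694150369906511445902023248852434733,
   4352039171073362163750985473796873159590087788708037165086871559785526299922569475264408218294,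
   201428198714139546830908844384120402985936122755653051257268454517994799880640480240120060030348,
   333220264639720754762411849861376773464003053946242909151652248645305950510146411013810954171020,
   145297328780051911650417983312083183548947268381860350879208188355854642332755377106985549764894,
   20225049742680646654887475604908430419232949830566495155663604155617906489757134865736852450230,
   236880123672650174983026379054217622555116067128099282997375047717946928047261605971088196114013,
   4073267138914828857792868567448965689141366294070182387994777732163896989262889620907425736685,
   13423665741404806221108054052947296353520845262143897657768386652166179990403521553081168030304,
   61791989705925794740727705540626026915717472332748360541666165112509020335062411349906885500744,
   103669639977078935540544466737828048726526395188413121454870936865801234825609667091272100148086,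
   81069257516241518685948293048012150154738409252143988888168473637946911106372803681937208026074,
   38936301574981504437685495894432089117707608199299178897627161674777101082176482882018324216037,
   6998811156788344368119696245924148076508349274686310044535236914241540994504129696777108580423,
   16652936161716587293697334566924609664585697671487860827599599966732551447174563121081664696180,
   156015763259370693447695647105931567970395758989361455652991199350276113153601218339402277162096,
   9961386779869170461042695823634754711985201418438394798576531911386635033550272402153400916569,
   19871479088273382172583704881387343746709655421354303742200031239174935040774212642417701162252,
   3761588529634663601842625952409481152955294194437122975208192387812980036508811734163049532877,
   40292980273203374050295446482465603735277427797695747608858925286548935481601985056776872030097,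
   244930770217855678053718654204387098365422836647297916985397285938203149059137728913104536284145,
   203324100866829342833818491857993759751013270324478763262103651389955587330371648785082737788882,
   29261358384409007576211219677260034612794101368571741147164887149090055940995104416296205468369,
   29261345498264935116094799100261705193754266810650067050526747679768845952896832592400238064062,
   3761588529634679976064417020326764357097685846189670752487671945829942437206030167180262112062,
   3793692403186416667754706986154933841094345966576349365422818678158942008668577184624344202097,
   30347837200749166492465863859771740328749517552459241007226968091709967488896832592488205466109,
   286967442166891369984140934996061872983378364053625965598233360921867594948711736613845524124097,
   198246355542459217313920408631654412042640359887096825537305319861482867244631084114955049532310,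
   15587380005687237797855364009904324307893984510673403961397285914134022918976451488400248050099,
   19879397669445260498071294372268240027465652643190549425271535653907979014211617744112104074050,
   160354488013026625350380132818253516379185836491769595389455124669118977665761794466483616124066,
   7529081899861972357484173337158153240101347892468648707535724922089584953623083942161476748585,
   235426231053429224887482872524800452557346271539307154322836519287478108335068238305441632438219,
   9938961137347766566210201397350388319184122888823177469980698642957149998145984224208148102770,
   236880123677484903230759930399063805529426298504183922794571828697877108782326539541864248028026,
   193634086330285921883283104267771058852597028763966525081436899701433689518295115173834941476750,
   187467051332924468718041807525986619715882975691178287313022990349321478577181739717498749813704,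
   122453411668340903405401751447150711335311708423996285034522662937613835014336800245885602040852,
   61776279186291563801142729175867825181617441913807385449998957179546183405714992960688216226425,
   113337365263343838464114447589346348463603484492988957135071373429816862848897600951059568148113,
   61480048041443769861651275276404420511532713214968250671280239623174660999240614677672436028265,
   155173817124512832677849678951597447999359463638199457965458519586833934468738497376776436028226,
   20949510038715177451550537751601627624958463607997211070492698643995905808973510866792600612457,
   93704127353856457787374438162229426023621548325410876466721642947857671949975872208432264148113,
   3776630578041420408665873188947786729265627988613254176999499825691905793665249744113060844429,
   6984605904151370902940736020041493235919577493182598699183335107100939025223750804651584148109,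
   61768357851671682640569778122550965188573928165228658921572415523859980417665249808688388218014,
   160396339818779856436378766769705219033558238668689049182996837389315342082496888641105177154074,
   3776633061120044262521070961514233078823100267109482959024195639843362432903747472496388412051,
   71405581095809999010971194732857789784136944125313918017562687538202500099970368225104872054062,
   93704127353856457790952221414793126507394658550391243006399202678153217667138113200904264172109,
   413937420756434515102495725755336549343566302316757106892910652451868956945229742240872056530422,
   16646490552660587780060416612263017062340954882945319071819791903499377871473162998131670763394,
   206818440788056083365132817727022985144580130121594551140429840146442162541057216241168052098057,
   58520946835139766582836418302119744491557586745975067612906256772118030470980673552112104078766,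
   71192061571321390463826754812387110999453415939396224415224260048102772428204763431104248132097,
   243344264372104978789401293428372285168029405218980446478559246367753731203201889810156192218014,
   6984595961973489520668364301885612026386777309430947897544744643429061464835618210153176850581,
   374429157813704420810094148685143218852936828248654955703716467233039832837508002336104216140062,
   331796190440912653492486597022588101985966426096698048909365262356235616945053217185844138130597,
   413937420756434514800047005220611821176759128719769922502687633415905281999394192902059065827714,
   250865018201313856974808470823159911031222702506869441007642650644164214586269907419050326788597,
   154892359258952638002161548443981025907762119910709084623071507463235894040652576629867511072549,
   273898166116935152861972307779294918483165676651648879681687787987850257682833320465681828900557,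
   3761588529680101738331355832420167583532713149258911974852707335174685614166347728776056052231,
   193769065139645319082993046820782543045661427434881565118492698642958598276081153184432344132109,
   19873087885880502566260344365311871951312388555178287325300786208445058608028238311252294170744,
   229896898226671647459735556033195732772292922999996530794571828616386062468736448416296207384113,
   35989822849081476614494586860329946451067363897464974173711121846534240945117228150931028906767,
   3793678390275202659143287806763528883804440298275324190937229380645139334273728784496280212138,
   110921446167224452766693302771242465633703403063099998478534670349321998468738113552112104078109,
   124078687098419618186319206866253519921356015993717375328454670349321997952904485779377492778401,
   248131449171308463686260586749394438990805704270414716985454863391760904968512800627402327098373,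
   3761588665966588783375708875411603682311632729806752753167121786133876780631083749971001519050,
   57206552899682115734676231462905727951311866627637362794576628081370739396706737280904296108097,
   29261347384966105483698864768883989205367523672473911506301684167433863876695425744112216530210,
   17731377948994742585759871246381897644949922327533473339470911008796937476226497376776056052039,
   29275705989485171990305570523807148767373351464687094767767607340048909959744448416312296108086,
   29275705989485171401718997189076994894806485187081866121367640097819919488896832624592216172066,
   10529833503812619958761996475752283113260713239118430478512239677955587330510508320592264172054,
   103400421562358628644466165780174270724620317309444698462003951041417225476226752864872484028026,
   248421661469614194528685480070930305910588388874603667617198556552426763015235491874152056530422,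
   201428243230149628100685626133716194377097594673832103347577747907817589806235726039123609796906,
   13423665764502540905367489688743113752625634389721498096037903385603610541335627941995017518738,
   119514618895024085847358103935015646748258884333377506301448969580733024048471083712400484412015,
   52651084297848537605057267508497114215881769849653306448679380200054060899203200432217028539382,
   114163067026041295637429138754709775715539225970442362929529030799980835602317121890792584074099,
   93740628662673424942694994065786152721082829285252112639701376129574433921667778145160396696016,
   146380732759664817284213209416801675914418483266749122062037017674808067456776996899401112820118,
   206813147575870788758369588169742490546603754292806492610590904420355616529033634130993544796533,
   282019198999416523333105186003869555329655768646567734007310480437815578376768873576268089444213,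
   4352048829513020647818714569377354887868206059552882790627340344881442066825634130321188612621,
   249562667928719497983131618717662241670980307718065349550576708139876873486993451622091081082207,
   6724046787505640214070613676013992335405890182403041116235877382686243987021225040306309234773,
   80533998887415404669847166108317797900638500293542199693340822627334668416900706948616440074099,
   70870322477457805256377516729458833853034339732554056081623153961583945728835172578449396924566,
   7271940126239424223793237115247121459224333910229959496124650535995660674371168192784420222269,
   77887404411660747032830109003392016474703405688114545676316710961701650835331137712104392210110,
   122758372734990375037931262015821127668633765086466683162826764338202894225224448400792772508301,
   33574573652224403374080289634574676533186791716706209338874098214958125057677124450289224844450,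
   200393178671851366962394443153486678329001575681509026768655252091659359532632236274155669858912,
   195833535899849577873147429658934438541796185899221314589116650621514272407109792245476097468721,
   64996998922130856400453210550049970590727676407924179046477837341199622403541963621866981394710,
   203233170197963823590200656535856147108994297400230002849231598961854813370717747353931696188250,
   330134280212444992862765136842071769103863253370110624141343630705888883396706739353932320188250,
   58281560262640872027136131622553807763538930972563114911527629337917789743768236279339718147085,
   10211561107020390903547191988639527373259670324823598096986425403398929042569644375436310170768,
   249522216399730734679613189107239904609973377994408575930570776705603841797251778320793124818421,
   200559415558163164421054213067595323814576983181091243409776666833991222023424484899601828600773,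
   67966001844117739531896497387907084193236649149235642605695052812809734916736416800475461476889,
   17726807299828212102909535646129345542096618292085244190873637901325833475650624784496284456113,
   245183499784682368322648889083080486251595192648816774899862611339581725191244357588336720026054,
   19874699236816003868993288945015481447881769855948360541663988094145890233622699575106845732853,
   17725062626141865478238765821861749946892317705396925356526490223411212416898754321072572194015,
   26693536112577466386647670325702271030836753152759582218005391833912627973255624852396180290074,
   58281364971493066247744099790139222817707135239274996109342856221206028039812514321640868026050,
   241619439666457007488283884558618779206695657210103538655260760114835457670345157588532097395060,
   23103306683854631454084603040343013991915328014730010685638671404056833801284290272496605732882,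
   322135567329503997756835020135674953213340050043017350244192798243420434599319758309866196114069,
   4052304331420656877249099571960745308866882741310983071466228093750404930051104240776061397217,
   15328484749857322379070794685977057653744076358566396191140066488927762200647363729905564030015,
   40304788091088802089108862725196548234946414445363708744129140083906135724609568992560296466217,
   285177587565934718440664324078425667409547236050307034042859656267299346568577569057146936174138,
   183998338840110705116104344100888133246259366103368953430315764106296155213590315814059049534890,
   203224573824008044327558751421039047748554327622517203296553097288731155332738798401179653518868,
   4042102112610673267910068163417666584634623080486850144406615675619334275457826209160536286733,
   15307401758777915965702651539482673270110455940276925307289699341346066822208868034112096030080,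
   333160091990198232090740565028675594492186139667405983385105307776103986979675713313936388148026,
   35709570691055879603731820678688545452461721158632514123825866270727006511777832792532294171229,
   17033891726762517873251775029565213918236316306720604468974489711157789444739104440588341824758,
   149639349652104225070023751306103200444899526902563258601599124556295006511714734401160388052049,
   77853140237485858736896038944272027595878456571795361409198182615573006116966080784458885469201,
   187106093327961063953565871142631125819339906068813291741604755907768840973447077778992264124217,
   18530775585901467819663277759686265810068312890573982689072686877301766276076758146410905516685,
   15310768479621079959655973805129659416082024274223706462669584614708849923137843041200616266061,
   199990995216361744397564300389186573452997122764521971945613387820765811514456299144162954068049,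
   190423466637639154456805761623355559011174397546957096591528057010796104322450468294818753477020,
   187467051059654504121108020346628013405811345635844509935071995243704673196055633367298789494901,
   72266219213022805761504486041972476922914593343910281613340698644361484936835460256208060026027,
   29295588144693171314560425078075225107211923839364317233205286947874577675584832592560541420113,
   206546918692888056928650339808644873439735281235827933570880227777250676942172427193634792148113,
   9945412326100724132926923589355048044332713214378304274655259740700535361307275173907001514765,
   193908303571849516103329357990850261507945161011124300633576162939708503852696300145441408534577,
   200087143045885191125032477183734643829748162801915382572587710827710816944984685701483577812913,
   8917951189206853337530598494532001419541876277372698]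

/-- The decision tree for the configuration `(4, 3, 3, 3)`. -/
def tree4333 : SplitTree := .decode
  [23098081994384712349700579423047694981689909088109601320992792638498575624516642928200484172095,
   37062079786206372859220683338845677174268498575786688880832758815771920655947814099281492724051,
   38925025942743418678022850605090887708186642416829514621383185679030876974145733984400824726349,
   25265555962072599890988420451840057441136283551877407912112224319328369164544900707602400242134,
   184001034137313200320922352938589457223128583176618976219359652934694437651596840916552576172090,
   65799050453184808891778647323645083126996875739400996021389938836593937699459009937554229146758,
   94521664636887583121455117328036947319995972000911927132657911071374665423719332114025722454121,
   193659741343114763429864727234242165653266585584026780189614393629329687567559713586321781138602,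
   38821362588712781208183450077955364621542044647909090758758459583072599943847222182914745418286,
   275284521873452067874650452265369446167104338339447775781160986717233424776068418402353224818553,
   333514457142200983377896585324674163568172140135353329161599101558077872824085963345042885731022,
   34646375910164671289581451448916535166640722575788255093870725176864273673609412899178260289225,
   32498685083211138862116207918647934767620043146625795043602582540875279505801250914409784490241,
   74397181989836039710305412164162304681350634734977917465290893380614411137035140707602277162600,
   65799045416530934948709029623468399826596677854823391781160974459457824403601833945816348580121,
   200344836229322355161933573151337224626904895623644627510489715786758424711812132464201176924458,
   82188241986012527569966725140251774027440984725933236970318284954655644728150699941482797730721,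
   106324874248773810917659485099057511663276001661586425389500651639365399299970369633104772506282,
   122951765317285797945424489099654356023386970296174855398093060127762962567808418146993508460387,
   198209130950456956615242733030153405360376978411208826943988604942481842181381827090024408588301,
   13429571192862314384056931207835426803062478604370691068156041294872074883970370276138133090714,
   29569535385787466498196145207199210676163325761307068076985051531961967394139683680529557442698,
   101208514518979512809831016926814984016137121104675284505340446047807030435411585956968052292094,
   234396368757701820287215686699381780913479627016144044085694699662372390160022859622187080722054,
   25247713127978684771725245472055114146659701559560554813923551349894472365720744273683480754865,
   191763067053378820794822875794313318238145745853845160350517667884056081679427907986025148244086,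
   23097535120629675799943332512366975061234372499500152393855051838497311895629347489841717034210,
   328881900316639820771540865530559214132541665220791453331632225379469836067666345024216400054027,
   100177297770148256429603504220917789671721097926623773143216220208189714185606979682065476834249,
   39245001543672854174212381499337269999441545200830202798657905691965874862487075365994857492878,
   69310446322630079091072058381683973977595251068471631978670204996133710375507841953105153114028,
   119783767311101127964849789988798381431066270831267128279224473661446923784516546322328096266289,
   192851191263212706170920132514160985581833949617161699922235480110104083209095716128976532738417,
   99149103833113542360921377563948471595715405457294443090112669703232032912195105376890745398769,
   248131872761411699795587100009772471595715405449627287937306675262467331203714797893716321374769,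
   32750872288273209555370417114349321070057685844181696968207071603903085227995691541970741398932,
   244910647289417038769184702209389682589221675546795454683925911622731397658446407140554356100058,
   149600995723937894101204280123918956920324034496267240174070006827566624647746753523236978760932,
   23097535124119369234747006446243173910724089645139936252156000318510863493507042308553840284306,
   152759107591215800182604247974682924952456398832830104408510690422389774105474720800424248130075,
   13518558419372265181643202987339833697144278033322486060163099699206915461507042209201224802557,
   32767667024507121612454298239843769306475240541940897373262241817613575940162411623060154748100,
   83268150846181759660529199352970251618907463783318512181545113662498084498624517572554449234620,
   119797003528695040672010852358996136329242293470577706668911827566110987014098211841457176602154,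
   48908568640412172189607408642150290961382672248395344799148135802126940580435713376752440486450,
   328589442556339735690106911368384494248827428703142691234058499127820807940742595489848360188241,
   17026375074710718054221834407149328755461391161820316279055036459032123598183458368880728482255,
   25624878987417642735488419655700424809046869607416414565804084612274530616471424800496296174710,
   65799039509076637706630057279420566459857572138484220743946329096239119624644288400984100242086,
   150674080512969200576989558442426390289714317328794633396472092820014630551115937059569396916569,
   124842627896054104015224619239408144485458513791321661956690229341233434253890118419305701108094,
   65269303538815536617593833300964178936345068406214296101160986679841551745604610464688376482182,
   39479483672989300350771150257690529787689174893365076238815443138086437651596713042400972268145,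
   63658016233979084601030762119235209840718518848995836190871779445267998115332804434281160242130,
   25505008844474892241191760324274461100230911499715643228559559779929118876050434322064600244133,
   152879380644994265331666601928371025013398646728574009696440417311766028168588839380460944050090,
   23117813007575075265171440257878011995234646693661679902847051815991601294662592802313516276126,
   106891149845466966900703682986316452359966957277169730626087281695761968001029890209008580308398,
   323897600886382256518905404303990641442578700864997205447420298439264827805325225425440376284282,
   77904562622842235097163558585265838108183693334905603707701520597623198341507490273200997108585,
   38145368320637114207388995661375528530361590810706919477299338418723344156046792916554449234600,
   38155698723616954148702319259199525386733621413838954598677366209298803248279884119251640266126,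
   202500511081047721828189244455272917528360127105041473593444478388405593390178347910003016266126,
   23519253803974219960802590415962307596405581617644749382585587778624343596566768342835670067056,
   77615168309840609790539698664475496835332113205563958231413037210133772560260801969200568366121,
   139379225494962396421417002752861590002611657671672348958986467472476463773888833745200492604397,
   27400031235264659348974542831905479646810034065001358839943645250097459866304803281680868444297,
   38137574834447649316832318341811584124593441540506599878939046955164751014400801633168772814025,
   149594934990396990008129457702858446630686956655366300148011021454372386451143876708424720242129,
   330338599146730385818303119404527375116548119105029227090096374913574415624521124657544552252306,
   16652418558026804086507334691671528983365292691310658150691403070109208792172833953065188930602,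
   15328350342183436647297821274346669512345391440724705845555648742517027474249249505640868516361,
   38943816424495781961040973153916494036607509631749703508921579586870875447712677778984280124049,
   78958948078408688015406996397235378593735184288700001162769098080008538795926371970784736276126,
   249200223328256930291402891419042645137492150914883890669653226707601841455624228050416552490205,
   16661534083066158224077161028977180550112090688997223168043746655411055672156459622834750056876,
   55031339751008737928400648527438597200065290866808868382567344749879819501400321360752216252050,
   289003610156386179108891475684196369843899232106617668588114380892675335940482795152712340100058,
   26318100326739926856029620528099700022466918817173948829943945222662411158340418144688380448452,
   37063560273114491577985864456794601426261447377306731090422023211039255430019906929536736276145,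
   69001071242157060193142207241331475767897885836657508897018006658595372678274721696976588032184,
   23379804937137657931125957530370552699831329561348506100337906736150017927822771792752344030245,
   272785030192340150066580259570159703165505352859025735296104348026025]

theorem refutes_tree6000 :
    refutes tree6000 (sizes 6 0 0 0) false false fun _ => true := by
  decide +kernel

theorem refutes_tree0040 :
    refutes tree0040 (sizes 0 0 4 0) false false fun _ => true := by
  decide +kernel

theorem refutes_tree5030 :
    refutes tree5030 (sizes 5 0 3 0) false false fun _ => true := by
  decide +kernel

theorem refutes_tree5520 :
    refutes tree5520 (sizes 5 5 2 0) false false fun d => d.mark == false := by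
  decide +kernel

theorem refutes_tree5422 :
    refutes tree5422 (sizes 5 4 2 2) true false fun d => d.color == true := by
  decide +kernel

theorem refutes_tree4432 :
    refutes tree4432 (sizes 4 4 3 2) true true fun d => d.mark == true := by
  decide +kernel

theorem refutes_tree4333 :
    refutes tree4333 (sizes 4 3 3 3) false true fun d => d.color == true := by
  decide +kernel

/-! ### Counting -/

namespace MarkedColoring

variable {V : Type*} [LinearOrder V] [BoundedOrder V] [Fintype V] (c : MarkedColoring V)

theorem card_reverse_vertexClass (p q : Bool) :
    (c.reverse.vertexClass p q).card = (c.vertexClass q p).card :=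
  Finset.card_equiv ofDual fun _ => toDual_mem_reverse_vertexClass

theorem vertexClass_compl (p q : Bool) : c.compl.vertexClass p q = c.vertexClass (!p) (!q) :=
  Finset.ext fun _ => mem_compl_vertexClass

theorem realizes_sizes {i j k l : ℕ} :
    c.Realizes (sizes i j k l) ↔ i ≤ (c.vertexClass false true).card ∧
      j ≤ (c.vertexClass true false).card ∧ k ≤ (c.vertexClass false false).card ∧
      l ≤ (c.vertexClass true true).card := by
  simp only [Realizes, Bool.forall_bool, sizes]
  tauto

theorem card_le_sum_card_vertexClass :
    Fintype.card V ≤ ∑ p, ∑ q, (c.vertexClass p q).card + 2 := by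
  have hcover : (Finset.univ : Finset V) ⊆
      (Finset.univ.biUnion fun a : Bool × Bool => c.vertexClass a.1 a.2) ∪ {⊥, ⊤} := by
    intro v _
    rw [Finset.mem_union, Finset.mem_insert, Finset.mem_singleton, or_iff_not_imp_right, not_or]
    rintro ⟨hbot, htop⟩
    exact Finset.mem_biUnion.2 ⟨(c.color ⊥ v, c.color v ⊤), Finset.mem_univ _,
      mem_vertexClass.2 ⟨bot_lt_iff_ne_bot.2 hbot, lt_top_iff_ne_top.2 htop, rfl, rfl⟩⟩
  calc Fintype.card V
    _ ≤ _ := Finset.card_le_card hcover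
    _ ≤ _ := Finset.card_union_le _ _
    _ ≤ _ := Nat.add_le_add Finset.card_biUnion_le Finset.card_le_two
    _ = _ := by rw [Fintype.sum_prod_type]

theorem card_lt_of_card_vertexClass_le
    (hmixed : (c.vertexClass true false).card ≤ (c.vertexClass false true).card)
    (hpure : (c.vertexClass true true).card ≤ (c.vertexClass false false).card) :
    Fintype.card V < 15 := by
  have h6000 := mt c.realizes_sizes.2 (not_realizes_of_refutes refutes_tree6000)
  have h0040 := mt c.realizes_sizes.2 (not_realizes_of_refutes refutes_tree0040)
  have h5030 := mt c.realizes_sizes.2 (not_realizes_of_refutes refutes_tree5030)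
  have h5520 := mt c.realizes_sizes.2
    (not_realizes_of_refutes_mark (by decide) (by decide) refutes_tree5520)
  have h5422 := mt c.realizes_sizes.2
    (not_realizes_of_refutes_color (by decide) (by decide) refutes_tree5422)
  have h4432 := mt c.realizes_sizes.2
    (not_realizes_of_refutes_mark (by decide) (by decide) refutes_tree4432)
  have h4333 := mt c.realizes_sizes.2
    (not_realizes_of_refutes_color (by decide) (by decide) refutes_tree4333)
  have hcard := c.card_le_sum_card_vertexClass
  simp only [Fintype.sum_bool] at hcard
  omega

theorem card_lt_of_card_vertexClass_true_le
    (h : (c.vertexClass true true).card ≤ (c.vertexClass false false).card) :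
    Fintype.card V < 15 := by
  rcases le_total (c.vertexClass true false).card (c.vertexClass false true).card with hle | hle
  · exact c.card_lt_of_card_vertexClass_le hle h
  · rw [← c.card_reverse_vertexClass, ← c.card_reverse_vertexClass] at h hle
    exact Fintype.card_orderDual V ▸ c.reverse.card_lt_of_card_vertexClass_le hle h

theorem card_lt_fifteen (c : MarkedColoring V) : Fintype.card V < 15 := by
  rcases le_total (c.vertexClass true true).card (c.vertexClass false false).card with h | h
  · exact c.card_lt_of_card_vertexClass_true_le h
  · refine c.compl.card_lt_of_card_vertexClass_true_le ?_
    rwa [vertexClass_compl, vertexClass_compl]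

end MarkedColoring

/-! ### Diamonds -/

/-- The vertices `t < u < v < w` form a monochromatic diamond, whose missing edge is `(t, w)`. -/
structure IsMonoDiamond {V : Type*} [LT V] (color : V → V → Bool) (t u v w : V) : Prop where
  lt₁₂ : t < u
  lt₂₃ : u < v
  lt₃₄ : v < w
  color₁₃ : color t v = color t u
  color₂₃ : color u v = color t u
  color₂₄ : color u w = color t u
  color₃₄ : color v w = color t u

open Classical in
/-- The marked coloring of a coloring without monochromatic diamonds, in which the left edges of
monochromatic triangles are marked. -/
noncomputable def MarkedColoring.ofDiamondFree {V : Type*} [LinearOrder V] (color : V → V → Bool)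
    (h : ∀ t u v w, ¬IsMonoDiamond color t u v w) : MarkedColoring V where
  color := color
  mark u v := ∃ w, v < w ∧ color u v = color u w ∧ color v w = color u w
  mark_left _ _ w _ hvw hl hr := decide_eq_true ⟨w, hvw, hl, hr⟩
  mark_right t u v htu huv hl hr := decide_eq_false fun ⟨w, hvw, hl', hr'⟩ =>
    h t u v w ⟨htu, huv, hvw, hl.symm, hr.trans hl.symm, hl'.symm.trans (hr.trans hl.symm),
      hr'.trans (hl'.symm.trans (hr.trans hl.symm))⟩

theorem card_lt_fifteen_of_diamondFree {V : Type*} [LinearOrder V] [BoundedOrder V] [Fintype V]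
    (color : V → V → Bool) (h : ∀ t u v w, ¬IsMonoDiamond color t u v w) : Fintype.card V < 15 :=
  (MarkedColoring.ofDiamondFree color h).card_lt_fifteen

theorem containsMonoOrderedCopy_diamond_iff {N : ℕ} {c : ℕ → ℕ → Bool} :
    ContainsMonoOrderedCopy 4 N {(1, 2), (1, 3), (2, 3), (2, 4), (3, 4)} c ↔
      ∃ t u v w, 1 ≤ t ∧ w ≤ N ∧ IsMonoDiamond c t u v w := by
  constructor
  · rintro ⟨b, φ, hrange, hmono, hcolor⟩
    simp only [Finset.forall_mem_insert, Finset.mem_singleton, forall_eq] at hcolor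
    obtain ⟨h₁₂, h₁₃, h₂₃, h₂₄, h₃₄⟩ := hcolor
    rw [← h₁₂] at h₁₃ h₂₃ h₂₄ h₃₄
    have hlt : ∀ i, 1 ≤ i → i < 4 → φ i < φ (i + 1) := fun i hi hi' =>
      hmono i (i + 1) hi (by omega) (by omega)
    exact ⟨φ 1, φ 2, φ 3, φ 4, (hrange 1 (by omega) (by omega)).1,
      (hrange 4 (by omega) (by omega)).2, hlt 1 (by omega) (by omega), hlt 2 (by omega) (by omega),
      hlt 3 (by omega) (by omega), h₁₃, h₂₃, h₂₄, h₃₄⟩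
  · rintro ⟨t, u, v, w, ht, hw, h⟩
    have htu := h.lt₁₂
    have huv := h.lt₂₃
    have hvw := h.lt₃₄
    refine ⟨c t u, fun | 1 => t | 2 => u | 3 => v | _ => w, fun i hi hi' => ?_,
      fun i j hi hij hj => ?_, ?_⟩
    · interval_cases i <;> grind
    · interval_cases j <;> interval_cases i <;> grind
    · simp [h.color₁₃, h.color₂₃, h.color₂₄, h.color₃₄]

/-- A coloring of the pairs of `{1,…,14}` without monochromatic diamonds, found by computer search.
The colors of the pairs `u < v` are listed by increasing `v` and then by increasing `u`. -/
def extremalColoring (u v : ℕ) : Bool :=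
  Nat.testBit 1275149205399809931909275222 ((v - 1).choose 2 + (u - 1))

theorem not_isMonoDiamond_extremalColoring {t u v w : ℕ} (ht : 1 ≤ t) (hw : w ≤ 14) :
    ¬IsMonoDiamond extremalColoring t u v w := by
  have hcheck : ∀ w < 15, ∀ v < w, ∀ u < v, ∀ t ∈ Finset.Ico 1 u, ¬(
      extremalColoring t v = extremalColoring t u ∧ extremalColoring u v = extremalColoring t u ∧
      extremalColoring u w = extremalColoring t u ∧
      extremalColoring v w = extremalColoring t u) := by
    decide +kernel
  exact fun h => hcheck w (by omega) v h.lt₃₄ u h.lt₂₃ t (Finset.mem_Ico.2 ⟨ht, h.lt₁₂⟩)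
    ⟨h.color₁₃, h.color₂₃, h.color₂₄, h.color₃₄⟩

end OrderedDiamond

open OrderedDiamond

/-- The ordered Ramsey number of the diamond `K₄ - e` on vertex set `{1,2,3,4}` with
all edges of `K₄` except `(1, 4)` equals `15`: every 2-coloring of the edges
of the complete graph on `{1,…,15}` contains a monochromatic ordered copy, and
some 2-coloring of the edges of the complete graph on `{1,…,14}` contains
none. -/
theorem orderedRamsey_diamond_missing_14_eq :
    (∀ c : ℕ → ℕ → Bool,
      ContainsMonoOrderedCopy 4 15 {(1, 2), (1, 3), (2, 3), (2, 4), (3, 4)} c) ∧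
    (∃ c : ℕ → ℕ → Bool,
      ¬ ContainsMonoOrderedCopy 4 14 {(1, 2), (1, 3), (2, 3), (2, 4), (3, 4)} c) := by
  simp only [containsMonoOrderedCopy_diamond_iff]
  refine ⟨fun c => ?_, extremalColoring, ?_⟩
  · by_contra! hc
    have hfree (t u v w : Fin 15) :
        ¬IsMonoDiamond (fun u v : Fin 15 => c (u + 1) (v + 1)) t u v w := fun h =>
      hc (t + 1) (u + 1) (v + 1) (w + 1) (Nat.le_add_left 1 t) w.isLt ⟨Nat.succ_lt_succ h.lt₁₂,
        Nat.succ_lt_succ h.lt₂₃, Nat.succ_lt_succ h.lt₃₄,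
        h.color₁₃, h.color₂₃, h.color₂₄, h.color₃₄⟩
    simpa using card_lt_fifteen_of_diamondFree _ hfree
  · rintro ⟨t, u, v, w, ht, hw, h⟩
    exact not_isMonoDiamond_extremalColoring ht hw h
end

section
/- The ordered Ramsey number of the ordered diamond graph K₄ − e with vertex set {1,2,3,4} and all edges of K₄ except {2,4} equals 14: every 2-coloring of the edges of the complete graph on {1,...,14} contains a monochromatic ordered copy of this graph, and there is a 2-coloring of the edges of the complete graph on {1,...,13} containing no such copy. -/
/-!
Upper bound: among 14 vertices the first one, `v`, sends at least 7 edges of one color, say red, to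
a set `t` of later vertices. Split `t` according to whether a vertex has a red edge to an earlier
vertex of `t`; one of the two parts has at least 4 vertices. There is no red edge among the
vertices having no earlier red neighbor in `t`. If `w < x < y` in `t` and `wx`, `xy` are red, then
`v, w, x, y` is a red diamond. So in the absence of a red diamond both parts are blue cliques, and
the larger one contains a blue diamond.

Lower bound: color the edge `{i, j}` of `{1,…,13}` by whether `j - i` is a square modulo 13 (the
Paley coloring in the natural order). A diamond has consecutive gaps `x`, `y`, `z` such that `x`,
`y`, `z`, `x + y`, `x + y + z` all lie in the set `D` of squares, or of nonsquares, in `{1,…,12}`.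
Then `x + y` is one of `4, 10, 12`, respectively `7, 8, 11`, and adding an element of `D` to one
of these never gives an element of `D`.
-/

open Finset

section LinearOrder

variable {α : Type*} [LinearOrder α] {R : α → α → Prop} {V W t u : Finset α} {v : α} {k : ℕ}

/-- The ordered diamond `K₄ - {2, 4}` has a copy on vertices of `V` all of whose edges lie in `R`.
A color class of a 2-coloring is encoded as a relation `R`, of which only the values `R x y` with
`x < y` matter; the other color class is then `Rᶜ`. -/
def HasOrderedDiamond (R : α → α → Prop) (V : Finset α) : Prop :=
  ∃ p ∈ V, ∃ q ∈ V, ∃ r ∈ V, ∃ s ∈ V, p < q ∧ q < r ∧ r < s ∧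
    R p q ∧ R p r ∧ R p s ∧ R q r ∧ R r s

/-- The vertices of `V` form a clique of the color class `R`, edges being read from the smaller to
the larger endpoint. -/
def IsOrderedClique (R : α → α → Prop) (V : Finset α) : Prop :=
  ∀ x ∈ V, ∀ y ∈ V, x < y → R x y

theorem HasOrderedDiamond.mono (h : HasOrderedDiamond R V) (hVW : V ⊆ W) :
    HasOrderedDiamond R W := by
  obtain ⟨p, hp, q, hq, r, hr, s, hs, h⟩ := h
  exact ⟨p, hVW hp, q, hVW hq, r, hVW hr, s, hVW hs, h⟩

theorem IsOrderedClique.hasOrderedDiamond (h : IsOrderedClique R V) (hV : 4 ≤ #V) :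
    HasOrderedDiamond R V := by
  let f : Fin 4 ↪o α := V.orderEmbOfCardLe hV
  have mem (i : Fin 4) : f i ∈ V := V.orderEmbOfCardLe_mem hV i
  have lt {i j : Fin 4} (hij : i < j) : f i < f j := f.strictMono hij
  have adj {i j : Fin 4} (hij : i < j) : R (f i) (f j) := h _ (mem i) _ (mem j) (lt hij)
  exact ⟨f 0, mem 0, f 1, mem 1, f 2, mem 2, f 3, mem 3, lt (by decide), lt (by decide),
    lt (by decide), adj (by decide), adj (by decide), adj (by decide), adj (by decide),
    adj (by decide)⟩

theorem exists_subset_lt_card_and_forall_or_forall_not {β : Type*} {s : Finset β} (P : β → Prop)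
    (hs : 2 * k < #s) : ∃ u ⊆ s, k < #u ∧ ((∀ x ∈ u, P x) ∨ ∀ x ∈ u, ¬ P x) := by
  classical
  have hsum := card_filter_add_card_filter_not (s := s) P
  obtain h | h : k < #(s.filter P) ∨ k < #{x ∈ s | ¬ P x} := by omega
  · exact ⟨_, filter_subset _ s, h, .inl fun x hx ↦ (mem_filter.1 hx).2⟩
  · exact ⟨_, filter_subset _ s, h, .inr fun x hx ↦ (mem_filter.1 hx).2⟩

theorem isOrderedClique_compl_of_forall_not_exists_lt (hut : u ⊆ t)
    (hu : ∀ x ∈ u, ¬ ∃ w ∈ t, w < x ∧ R w x) : IsOrderedClique Rᶜ u :=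
  fun x hx y hy hxy hR ↦ hu y hy ⟨x, hut hx, hxy, hR⟩

theorem isOrderedClique_compl_of_forall_exists_lt (hv : ∀ x ∈ t, v < x ∧ R v x)
    (h : ¬ HasOrderedDiamond R (insert v t)) (hut : u ⊆ t)
    (hu : ∀ x ∈ u, ∃ w ∈ t, w < x ∧ R w x) : IsOrderedClique Rᶜ u := by
  intro x hxu y hyu hxy hR
  obtain ⟨w, hw, hwx, hRwx⟩ := hu x hxu
  have hx : x ∈ t := hut hxu
  have hy : y ∈ t := hut hyu
  exact h ⟨v, mem_insert_self v t, w, mem_insert_of_mem hw, x, mem_insert_of_mem hx,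
    y, mem_insert_of_mem hy, (hv w hw).1, hwx, hxy,
    (hv w hw).2, (hv x hx).2, (hv y hy).2, hRwx, hR⟩

theorem hasOrderedDiamond_insert_or_exists_isOrderedClique_compl
    (hv : ∀ x ∈ t, v < x ∧ R v x) (ht : 2 * k < #t) :
    HasOrderedDiamond R (insert v t) ∨ ∃ u ⊆ t, k < #u ∧ IsOrderedClique Rᶜ u := by
  refine or_iff_not_imp_left.2 fun h ↦ ?_
  obtain ⟨u, hut, hk, hu | hu⟩ :=
    exists_subset_lt_card_and_forall_or_forall_not (fun x ↦ ∃ w ∈ t, w < x ∧ R w x) ht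
  · exact ⟨u, hut, hk, isOrderedClique_compl_of_forall_exists_lt hv h hut hu⟩
  · exact ⟨u, hut, hk, isOrderedClique_compl_of_forall_not_exists_lt hut hu⟩

theorem exists_monochromatic_forward_star (R : α → α → Prop) (hV : 2 * k + 1 < #V) :
    ∃ v ∈ V, ∃ t ⊆ V, k < #t ∧ ((∀ x ∈ t, v < x ∧ R v x) ∨ ∀ x ∈ t, v < x ∧ Rᶜ v x) := by
  have hne : V.Nonempty := card_pos.1 (by omega)
  let v := V.min' hne
  have hvV : v ∈ V := V.min'_mem hne
  have hcard : 2 * k < #(V.erase v) := by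
    rw [card_erase_of_mem hvV]
    omega
  obtain ⟨t, htV, hk, ht⟩ := exists_subset_lt_card_and_forall_or_forall_not (R v) hcard
  have hlt : ∀ x ∈ t, v < x := fun x hx ↦ V.min'_lt_of_mem_erase_min' hne (htV hx)
  exact ⟨v, hvV, t, htV.trans (erase_subset v V), hk,
    ht.imp (fun h x hx ↦ ⟨hlt x hx, h x hx⟩) fun h x hx ↦ ⟨hlt x hx, h x hx⟩⟩

theorem hasOrderedDiamond_or_exists_isOrderedClique_compl (R : α → α → Prop)
    (hV : 4 * k + 1 < #V) :
    (HasOrderedDiamond R V ∨ ∃ u ⊆ V, k < #u ∧ IsOrderedClique Rᶜ u) ∨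
      (HasOrderedDiamond Rᶜ V ∨ ∃ u ⊆ V, k < #u ∧ IsOrderedClique R u) := by
  have hcard : 2 * (2 * k) + 1 < #V := by omega
  obtain ⟨v, hvV, t, htV, hk, ht⟩ := exists_monochromatic_forward_star R hcard
  have of_star {S : α → α → Prop} (hv : ∀ x ∈ t, v < x ∧ S v x) :
      HasOrderedDiamond S V ∨ ∃ u ⊆ V, k < #u ∧ IsOrderedClique Sᶜ u :=
    (hasOrderedDiamond_insert_or_exists_isOrderedClique_compl hv hk).imp
      (·.mono (insert_subset hvV htV)) fun ⟨u, hut, hu⟩ ↦ ⟨u, hut.trans htV, hu⟩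
  exact ht.imp of_star fun h ↦ by simpa only [compl_compl] using of_star h

theorem hasOrderedDiamond_or_hasOrderedDiamond_compl (R : α → α → Prop) (hV : 14 ≤ #V) :
    HasOrderedDiamond R V ∨ HasOrderedDiamond Rᶜ V := by
  obtain (h | ⟨u, huV, hu, hclique⟩) | (h | ⟨u, huV, hu, hclique⟩) :=
    hasOrderedDiamond_or_exists_isOrderedClique_compl (k := 3) R hV
  · exact .inl h
  · exact .inr ((hclique.hasOrderedDiamond hu).mono huV)
  · exact .inr h
  · exact .inl ((hclique.hasOrderedDiamond hu).mono huV)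

end LinearOrder

theorem not_hasOrderedDiamond_sub_of_forall_add_notMem {P : ℕ → Prop} {m n : ℕ} (D : Finset ℕ)
    (hP : ∀ d, 0 < d → d ≤ n → P d → d ∈ D)
    (hD : ∀ x ∈ D, ∀ y ∈ D, x + y ∈ D → ∀ z ∈ D, x + y + z ∉ D) :
    ¬ HasOrderedDiamond (fun i j ↦ P (j - i)) (Icc m (m + n)) := by
  rintro ⟨p, hp, q, -, r, -, s, hs, hpq, hqr, hrs, adj_pq, adj_pr, adj_ps, adj_qr, adj_rs⟩
  rw [mem_Icc] at hp hs
  have diff_mem {i j : ℕ} (hi : p ≤ i) (hij : i < j) (hj : j ≤ s) (h : P (j - i)) : j - i ∈ D :=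
    hP _ (by omega) (by omega) h
  have pr_eq : q - p + (r - q) = r - p := by omega
  have ps_eq : q - p + (r - q) + (s - r) = s - p := by omega
  refine hD (q - p) (diff_mem (by omega) hpq (by omega) adj_pq)
    (r - q) (diff_mem (by omega) hqr (by omega) adj_qr) ?_
    (s - r) (diff_mem (by omega) hrs (by omega) adj_rs) ?_
  · exact pr_eq ▸ diff_mem (by omega) (by omega) (by omega) adj_pr
  · exact ps_eq ▸ diff_mem (by omega) (by omega) (by omega) adj_ps

/-- The red color class of the Paley coloring on 13 vertices in their natural order: the edge
`{i, j}` with `i < j` is red if and only if `j - i` is a square modulo 13. -/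
def PaleyRed (i j : ℕ) : Prop := IsSquare ((j - i : ℕ) : ZMod 13)

instance : DecidableRel PaleyRed := fun i j ↦
  inferInstanceAs (Decidable (IsSquare ((j - i : ℕ) : ZMod 13)))

theorem isSquare_natCast_zmod_thirteen_iff {d : ℕ} (hd₀ : 0 < d) (hd : d ≤ 12) :
    IsSquare (d : ZMod 13) ↔ d ∈ ({1, 3, 4, 9, 10, 12} : Finset ℕ) := by
  interval_cases d <;> decide

theorem not_isSquare_natCast_zmod_thirteen_iff {d : ℕ} (hd₀ : 0 < d) (hd : d ≤ 12) :
    ¬ IsSquare (d : ZMod 13) ↔ d ∈ ({2, 5, 6, 7, 8, 11} : Finset ℕ) := by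
  interval_cases d <;> decide

theorem not_hasOrderedDiamond_paleyRed : ¬ HasOrderedDiamond PaleyRed (Icc 1 13) :=
  not_hasOrderedDiamond_sub_of_forall_add_notMem (m := 1) (n := 12) {1, 3, 4, 9, 10, 12}
    (fun _ hd₀ hd ↦ (isSquare_natCast_zmod_thirteen_iff hd₀ hd).1) (by decide)

theorem not_hasOrderedDiamond_compl_paleyRed : ¬ HasOrderedDiamond PaleyRedᶜ (Icc 1 13) :=
  not_hasOrderedDiamond_sub_of_forall_add_notMem (m := 1) (n := 12) {2, 5, 6, 7, 8, 11}
    (fun _ hd₀ hd ↦ (not_isSquare_natCast_zmod_thirteen_iff hd₀ hd).1) (by decide)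

theorem containsOrderedCopy_diamond_iff {N : ℕ} {c : ℕ → ℕ → Bool} {b : Bool} :
    ContainsOrderedCopy 4 N {(1, 2), (1, 3), (1, 4), (2, 3), (3, 4)} c b ↔
      HasOrderedDiamond (fun i j ↦ c i j = b) (Icc 1 N) := by
  simp only [ContainsOrderedCopy, HasOrderedDiamond, mem_insert, mem_singleton, forall_eq_or_imp,
    forall_eq, mem_Icc]
  constructor
  · rintro ⟨φ, hmem, hlt, hadj⟩
    exact ⟨φ 1, hmem 1 (by simp) (by simp), φ 2, hmem 2 (by simp) (by simp),
      φ 3, hmem 3 (by simp) (by simp), φ 4, hmem 4 (by simp) (by simp),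
      hlt 1 2 (by simp) (by simp) (by simp), hlt 2 3 (by simp) (by simp) (by simp),
      hlt 3 4 (by simp) (by simp) (by simp), hadj⟩
  · rintro ⟨p, hp, q, hq, r, hr, s, hs, hpq, hqr, hrs, hadj⟩
    let φ : ℕ → ℕ
      | 0 | 1 => p
      | 2 => q
      | 3 => r
      | _ => s
    refine ⟨φ, fun i hi hi' ↦ ?_, fun i j hi hij hj ↦ ?_, hadj⟩
    · interval_cases i <;> assumption
    · have hpr : p < r := hpq.trans hqr
      have hps : p < s := hpr.trans hrs
      have hqs : q < s := hqr.trans hrs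
      interval_cases j <;> interval_cases i <;> assumption

theorem containsMonoOrderedCopy_diamond_iff {N : ℕ} {c : ℕ → ℕ → Bool} :
    ContainsMonoOrderedCopy 4 N {(1, 2), (1, 3), (1, 4), (2, 3), (3, 4)} c ↔
      HasOrderedDiamond (fun i j ↦ c i j = true) (Icc 1 N) ∨
        HasOrderedDiamond (fun i j ↦ c i j = true)ᶜ (Icc 1 N) := by
  have compl_eq : (fun i j ↦ c i j = true)ᶜ = fun i j ↦ c i j = false := by
    ext i j
    simp
  simp only [ContainsMonoOrderedCopy, containsOrderedCopy_diamond_iff, Bool.exists_bool, compl_eq,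
    or_comm]

/-- The ordered Ramsey number of the diamond `K₄ - e` on vertex set `{1,2,3,4}` with
all edges of `K₄` except `(2, 4)` equals `14`: every 2-coloring of the edges
of the complete graph on `{1,…,14}` contains a monochromatic ordered copy, and
some 2-coloring of the edges of the complete graph on `{1,…,13}` contains
none. -/
theorem orderedRamsey_diamond_missing_24_eq :
    (∀ c : ℕ → ℕ → Bool,
      ContainsMonoOrderedCopy 4 14 {(1, 2), (1, 3), (1, 4), (2, 3), (3, 4)} c) ∧
    (∃ c : ℕ → ℕ → Bool,
      ¬ ContainsMonoOrderedCopy 4 13 {(1, 2), (1, 3), (1, 4), (2, 3), (3, 4)} c) := by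
  refine ⟨fun c ↦ ?_, fun i j ↦ decide (PaleyRed i j), ?_⟩
  · rw [containsMonoOrderedCopy_diamond_iff]
    exact hasOrderedDiamond_or_hasOrderedDiamond_compl _ (by simp)
  · simp only [containsMonoOrderedCopy_diamond_iff, decide_eq_true_eq]
    exact not_or.2 ⟨not_hasOrderedDiamond_paleyRed, not_hasOrderedDiamond_compl_paleyRed⟩
end

section
/- The ordered Ramsey number of the ordered diamond graph K₄ − e with vertex set {1,2,3,4} and all edges of K₄ except {3,4} equals 12: every 2-coloring of the edges of the complete graph on {1,...,12} contains a monochromatic ordered copy of this graph, and there is a 2-coloring of the edges of the complete graph on {1,...,11} containing no such copy. -/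
/-!
Two vertices `1 < 2` joined to each other and to `m` later vertices form an ordered book with `m`
pages; the diamond is the case `m = 2`. If a coloring has no monochromatic such book, then among
the forward neighbors `T` of a vertex in color `b`, every vertex has fewer than `m` forward
neighbors in color `b`. Hence, if `T` has `3 * m` elements, its least element `y` has at least
`2 * m` forward neighbors in `T` of the other color, and the least element `z` of those has at
least `m` of them as its own forward neighbors in the other color, so `y` and `z` span a book. By
pigeonhole, the least of `6 * m` vertices has `3 * m` forward neighbors in some color.
-/

open Finset

section Book

variable {α : Type*} [LinearOrder α] (c : α → α → Bool) (b : Bool) {S T : Finset α} {x : α} {m : ℕ}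

/-- The forward neighborhood of `x` in `S` in color `b`. Only the values of `c` on increasing pairs
are consulted, as an ordered graph has its edges listed that way. -/
def forwardNbrs (S : Finset α) (x : α) : Finset α :=
  {y ∈ S | x < y ∧ c x y = b}

/-- The coloring `c` contains, in color `b` and with vertices in `S`, an ordered book with `m`
pages: an edge `x < y` together with `m` common forward neighbors of `x` and `y`, obtained here as
forward neighbors of `y` within the forward neighborhood of `x`. -/
def ContainsBook (S : Finset α) (m : ℕ) : Prop :=
  ∃ x ∈ S, ∃ y ∈ forwardNbrs c b S x, m ≤ #(forwardNbrs c b (forwardNbrs c b S x) y)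

instance (S : Finset α) (m : ℕ) : Decidable (ContainsBook c b S m) :=
  inferInstanceAs (Decidable (∃ x ∈ S, ∃ y ∈ forwardNbrs c b S x,
    m ≤ #(forwardNbrs c b (forwardNbrs c b S x) y)))

theorem forwardNbrs_subset (S : Finset α) (x : α) : forwardNbrs c b S x ⊆ S :=
  filter_subset _ _

variable {c b}

@[gcongr]
theorem forwardNbrs_mono (h : S ⊆ T) : forwardNbrs c b S x ⊆ forwardNbrs c b T x :=
  filter_subset_filter _ h

theorem ContainsBook.mono (h : S ⊆ T) : ContainsBook c b S m → ContainsBook c b T m := by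
  rintro ⟨x, hx, y, hy, hm⟩
  exact ⟨x, h hx, y, forwardNbrs_mono h hy, hm.trans (by gcongr)⟩

variable (c b) in
theorem card_forwardNbrs_add_card_forwardNbrs_not (hx : IsLeast (S : Set α) x) :
    #(forwardNbrs c b S x) + #(forwardNbrs c (!b) S x) + 1 = #S := by
  have later : {y ∈ S | x < y} = S.erase x := by
    ext y
    simp only [mem_filter, mem_erase]
    exact ⟨fun ⟨hy, hxy⟩ => ⟨hxy.ne', hy⟩, fun ⟨hne, hy⟩ => ⟨hy, (hx.2 hy).lt_of_ne' hne⟩⟩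
  rw [← card_erase_add_one hx.1, ← later,
    ← card_filter_add_card_filter_not (s := {y ∈ S | x < y}) (fun y => c x y = b)]
  simp only [forwardNbrs, filter_filter, Bool.eq_not]

theorem exists_containsBook_of_le_card_forwardNbrs (hm : 0 < m) (hx : x ∈ S)
    (hcard : 3 * m ≤ #(forwardNbrs c b S x)) : ∃ b', ContainsBook c b' S m := by
  by_contra! noBook
  set T := forwardNbrs c b S x
  have few {y} (hy : y ∈ T) : #(forwardNbrs c b T y) < m :=
    not_le.1 fun h => noBook b ⟨x, hx, y, hy, h⟩
  obtain ⟨y, hy⟩ : ∃ y, IsLeast (T : Set α) y :=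
    ⟨_, T.isLeast_min' (card_pos.1 (by lia))⟩
  set U := forwardNbrs c (!b) T y
  have card_U : 2 * m ≤ #U := by
    have := few hy.1
    have := card_forwardNbrs_add_card_forwardNbrs_not c b hy
    lia
  obtain ⟨z, hz⟩ : ∃ z, IsLeast (U : Set α) z :=
    ⟨_, U.isLeast_min' (card_pos.1 (by lia))⟩
  have pages : m ≤ #(forwardNbrs c (!b) U z) := by
    have hUT : U ⊆ T := forwardNbrs_subset c (!b) T y
    have : #(forwardNbrs c b U z) < m :=
      (card_le_card (forwardNbrs_mono hUT)).trans_lt (few (hUT hz.1))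
    have := card_forwardNbrs_add_card_forwardNbrs_not c b hz
    lia
  have book : ContainsBook c (!b) T m := ⟨y, hy.1, z, hz.1, pages⟩
  exact noBook (!b) (book.mono (forwardNbrs_subset c b S x))

theorem exists_containsBook_of_six_mul_le_card (c : α → α → Bool) (hm : 0 < m)
    (hS : 6 * m ≤ #S) : ∃ b, ContainsBook c b S m := by
  obtain ⟨x, hx⟩ : ∃ x, IsLeast (S : Set α) x :=
    ⟨_, S.isLeast_min' (card_pos.1 (by lia))⟩
  obtain ⟨b, hb⟩ : ∃ b, 3 * m ≤ #(forwardNbrs c b S x) := by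
    by_contra! few
    have := few true
    have := few false
    have := card_forwardNbrs_add_card_forwardNbrs_not c true hx
    rw [Bool.not_true] at this
    lia
  exact exists_containsBook_of_le_card_forwardNbrs hm hx.1 hb

end Book

section Diamond

variable {N : ℕ} {c : ℕ → ℕ → Bool} {b : Bool}

theorem containsBook_two_iff :
    ContainsBook c b (Icc 1 N) 2 ↔ ∃ i j k l, 1 ≤ i ∧ i < j ∧ j < k ∧ k < l ∧ l ≤ N ∧
      c i j = b ∧ c i k = b ∧ c i l = b ∧ c j k = b ∧ c j l = b := by
  simp only [ContainsBook, Nat.succ_le_iff, one_lt_card, forwardNbrs, mem_filter, mem_Icc]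
  constructor
  · rintro ⟨i, hi, j, hj, k, hk, l, hl, hkl⟩
    rcases hkl.lt_or_gt with hkl | hlk
    · exact ⟨i, j, k, l, by grind⟩
    · exact ⟨i, j, l, k, by grind⟩
  · rintro ⟨i, j, k, l, h⟩
    exact ⟨i, by grind, j, by grind, k, by grind, l, by grind, by grind⟩

theorem containsOrderedCopy_diamond_iff_s19 :
    ContainsOrderedCopy 4 N {(1, 2), (1, 3), (1, 4), (2, 3), (2, 4)} c b ↔
      ContainsBook c b (Icc 1 N) 2 := by
  simp only [containsBook_two_iff, ContainsOrderedCopy, mem_insert, mem_singleton,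
    forall_eq_or_imp, forall_eq]
  constructor
  · rintro ⟨φ, range, increasing, edges⟩
    exact ⟨φ 1, φ 2, φ 3, φ 4, (range 1 (by simp) (by simp)).1,
      increasing 1 2 (by simp) (by simp) (by simp), increasing 2 3 (by simp) (by simp) (by simp),
      increasing 3 4 (by simp) (by simp) (by simp), (range 4 (by simp) (by simp)).2, edges⟩
  · rintro ⟨i, j, k, l, hi, hij, hjk, hkl, hl, edges⟩
    refine ⟨fun | 1 => i | 2 => j | 3 => k | _ => l, fun n _ _ => ?_, fun n n' _ _ _ => ?_, edges⟩
    · interval_cases n <;> grind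
    · interval_cases n' <;> interval_cases n <;> grind

theorem containsMonoOrderedCopy_diamond_iff_s19 :
    ContainsMonoOrderedCopy 4 N {(1, 2), (1, 3), (1, 4), (2, 3), (2, 4)} c ↔
      ∃ b, ContainsBook c b (Icc 1 N) 2 :=
  exists_congr fun _ => containsOrderedCopy_diamond_iff_s19

/-- A coloring of the complete graph on `{1,…,11}` without monochromatic ordered diamond, showing
that the bound `12` is sharp. It is given by the list of forward neighbors of each vertex in the
color `true`, and was found by computer search. -/
def diamondFreeColoring (i j : ℕ) : Bool :=
  j ∈ match i with
    | 1 => [2, 3, 4, 9, 10]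
    | 2 => [3, 5, 6, 7]
    | 3 => [5, 8, 10]
    | 4 => [7, 8, 9, 11]
    | 5 => [6, 8, 11]
    | 6 => [7, 11]
    | 7 => [10, 11]
    | 8 => [10, 11]
    | 9 => [10, 11]
    | 10 => [11]
    | _ => []

theorem not_containsBook_diamondFreeColoring :
    ∀ b, ¬ ContainsBook diamondFreeColoring b (Icc 1 11) 2 := by
  decide +kernel

end Diamond

/-- The ordered Ramsey number of the diamond `K₄ - e` on vertex set `{1,2,3,4}` with
all edges of `K₄` except `(3, 4)` equals `12`: every 2-coloring of the edges
of the complete graph on `{1,…,12}` contains a monochromatic ordered copy, and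
some 2-coloring of the edges of the complete graph on `{1,…,11}` contains
none. -/
theorem orderedRamsey_diamond_missing_34_eq :
    (∀ c : ℕ → ℕ → Bool,
      ContainsMonoOrderedCopy 4 12 {(1, 2), (1, 3), (1, 4), (2, 3), (2, 4)} c) ∧
    (∃ c : ℕ → ℕ → Bool,
      ¬ ContainsMonoOrderedCopy 4 11 {(1, 2), (1, 3), (1, 4), (2, 3), (2, 4)} c) := by
  refine ⟨fun c => ?upper, diamondFreeColoring, ?lower⟩
  case upper =>
    exact containsMonoOrderedCopy_diamond_iff_s19.2
      (exists_containsBook_of_six_mul_le_card c two_pos (by simp))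
  case lower =>
    rw [containsMonoOrderedCopy_diamond_iff_s19]
    exact not_exists.2 not_containsBook_diamondFreeColoring
end
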